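/- arXiv:math-ph/0504075 — 7 statements merged into one kernel-verified Lean document; each statement's English description precedes it below -/
import Mathlib

section
/- Fix real numbers t, r with 0 < t < 1, 0 < r < 1 and r² + t² = 1, and assume the topological support of ν has nonempty interior. Then for every α ∈ ℝ the Lyapunov exponent γ(e^{iα}) = lim_{k→∞} (1/k) 𝔼_ℙ[ log ‖Φ(k,·)‖ ] exists and is strictly positive. -/
open MeasureTheory Complex Filter

noncomputable section
attribute [local instance] Matrix.normedAddCommGroup

instance : Fact (0 < 2 * Real.pi) := ⟨by positivity⟩

/-- The torus `𝕋 = ℝ/2πℤ`. -/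
abbrev Torus : Type := AddCircle (2 * Real.pi)

/-- `ec a = e^{ia}` for `a ∈ 𝕋`. -/
def ec (a : Torus) : ℂ := (AddCircle.toCircle a : ℂ)

/-- The topological support of a measure. -/
def measSupport (ν : Measure Torus) : Set Torus := {x | ∀ s ∈ nhds x, 0 < ν s}

/-- The transfer matrix `T(θ,η)`, with phases in the torus. -/
def TmatA (t r : ℝ) (θ η : Torus) : Matrix (Fin 2) (Fin 2) ℂ :=
  !![-ec (-η), (r/t : ℝ) * (ec (θ - η) - ec (-η));
     (r/t : ℝ) * (1 - ec (-η)),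
     -(1/t^2 : ℝ) * ec θ + (r^2/t^2 : ℝ) * (ec (θ - η) + 1 - ec (-η))]

/-- The transfer matrix cocycle
`Φ(k,ω) = T(θ_{2(k-1)}+α, θ_{2k-1}+α) ⋯ T(θ_0+α, θ_1+α)`, `Φ(0,ω) = I`. -/
def Phi (t r α : ℝ) (ω : ℤ → Torus) : ℕ → Matrix (Fin 2) (Fin 2) ℂ
  | 0 => 1
  | (k+1) => TmatA t r (ω (2*k) + (α : Torus)) (ω (2*k+1) + (α : Torus)) * Phi t r α ω k

open scoped InnerProductSpace ENNReal

abbrev V2 : Type := Fin 2 → ℂ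
abbrev H2 : Type := Lp ℝ 2 (volume : Measure V2)

/-- Matrices with unimodular determinant. -/
def GD : Submonoid (Matrix (Fin 2) (Fin 2) ℂ) where
  carrier := {g | ‖g.det‖ = 1}
  one_mem' := by simp
  mul_mem' := by
    intro a b ha hb
    simp only [Set.mem_ofPred_eq] at *
    rw [Matrix.det_mul, norm_mul, ha, hb, one_mul]

lemma GD_mp (g : GD) : MeasurePreserving (fun v : V2 => (g : Matrix (Fin 2) (Fin 2) ℂ).mulVec v) volume volume := by
  have hdet : |LinearMap.det ((Matrix.toLin' (g : Matrix (Fin 2) (Fin 2) ℂ)).restrictScalars ℝ)| = 1 := by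
    rw [LinearMap.det_restrictScalars, LinearMap.det_toLin', Algebra.norm_complex_apply]
    have := g.2
    change ‖_‖ = 1 at this
    rw [Complex.normSq_eq_norm_sq, this]; simp
  have hne : LinearMap.det ((Matrix.toLin' (g : Matrix (Fin 2) (Fin 2) ℂ)).restrictScalars ℝ) ≠ 0 := by
    intro h; rw [h] at hdet; simp at hdet
  refine ⟨(by fun_prop : Continuous fun v : V2 => (g : Matrix (Fin 2) (Fin 2) ℂ).mulVec v).measurable, ?_⟩
  have := Measure.map_linearMap_addHaar_eq_smul_addHaar (volume : Measure V2) hne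
  rw [abs_inv, hdet, inv_one, ENNReal.ofReal_one, one_smul] at this
  exact this

def UG (g : GD) : H2 →ₗᵢ[ℝ] H2 :=
  Lp.compMeasurePreservingₗᵢ ℝ (fun v : V2 => (g : Matrix (Fin 2) (Fin 2) ℂ).mulVec v) (GD_mp g)

lemma UG_mul (g h : GD) (F : H2) : UG (g * h) F = UG h (UG g F) := by
  have := Lp.compMeasurePreserving_comp_apply (p := 2) (E := ℝ) F (GD_mp g) (GD_mp h)
  refine Eq.trans ?_ this
  have e : (fun v : V2 => ((g * h : GD) : Matrix (Fin 2) (Fin 2) ℂ).mulVec v) =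
      (fun v : V2 => (g : Matrix (Fin 2) (Fin 2) ℂ).mulVec v) ∘
      (fun v : V2 => (h : Matrix (Fin 2) (Fin 2) ℂ).mulVec v) := by
    funext v
    simp only [Function.comp, Matrix.mulVec_mulVec, Submonoid.coe_mul]
  change Lp.compMeasurePreserving (fun v : V2 => ((g * h : GD) : Matrix (Fin 2) (Fin 2) ℂ).mulVec v) _ F = _
  simp only [e]

lemma UG_coe (g : GD) (F : H2) :
    (UG g F : V2 → ℝ) =ᵐ[volume] fun v => F ((g : Matrix (Fin 2) (Fin 2) ℂ).mulVec v) :=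
  Lp.coeFn_compMeasurePreserving F (GD_mp g)

lemma UG_cont {Z : Type*} [TopologicalSpace Z] {g : Z → GD} {F : Z → H2} (hg : Continuous g)
    (hF : Continuous F) : Continuous fun z => UG (g z) (F z) := by
  have hg' : Continuous fun z => (⟨fun v : V2 => (g z : Matrix (Fin 2) (Fin 2) ℂ).mulVec v, by fun_prop⟩ : C(V2, V2)) := by
    apply ContinuousMap.continuous_of_continuous_uncurry
    have : Continuous fun z => (g z : Matrix (Fin 2) (Fin 2) ℂ) := continuous_subtype_val.comp hg
    change Continuous fun p : Z × V2 => (g p.1 : Matrix (Fin 2) (Fin 2) ℂ).mulVec p.2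
    exact (this.comp continuous_fst).matrix_mulVec continuous_snd
  exact hF.compMeasurePreservingLp hg' (fun z => GD_mp (g z)) (by simp)

/-- quadratic functional -/
def QF (w : V2 → ℂ) (F : H2) : ℂ := ∫ v, w v * ((F v ^ 2 : ℝ) : ℂ)

lemma QF_integrable {w : V2 → ℂ} (hw : Measurable w) (hb : ∀ v, ‖w v‖ ≤ 1) (F : H2) :
    Integrable (fun v => w v * ((F v ^ 2 : ℝ) : ℂ)) := by
  have h : Integrable (fun v => ((F v ^ 2 : ℝ) : ℂ)) := (Lp.memLp F).integrable_sq.ofReal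
  exact h.bdd_mul (c := 1) hw.aestronglyMeasurable (ae_of_all _ hb)

lemma H2_norm_sq (F : H2) : ‖F‖ ^ 2 = ∫ v, F v ^ 2 := by
  rw [← real_inner_self_eq_norm_sq, MeasureTheory.L2.inner_def]
  simp [pow_two]

lemma QF_diff {w : V2 → ℂ} (hw : Measurable w) (hb : ∀ v, ‖w v‖ ≤ 1) (F G : H2) :
    ‖QF w F - QF w G‖ ≤ ‖F - G‖ * ‖F + G‖ := by
  have e : QF w F - QF w G = ∫ v, w v * (((F - G : H2) v * (F + G : H2) v : ℝ) : ℂ) := by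
    unfold QF
    rw [← integral_sub (QF_integrable hw hb F) (QF_integrable hw hb G)]
    apply integral_congr_ae
    filter_upwards [Lp.coeFn_sub F G, Lp.coeFn_add F G] with v h1 h2
    rw [h1, h2]; simp; ring
  rw [e]
  refine (norm_integral_le_integral_norm _).trans ?_
  have h1 : ∀ (F : H2), MemLp (fun v => |F v|) (ENNReal.ofReal 2) volume := fun F => by
    simpa using (Lp.memLp F).norm
  have := integral_mul_le_Lp_mul_Lq_of_nonneg (μ := (volume : Measure V2)) Real.HolderConjugate.two_two
    (f := fun v => |(F - G : H2) v|) (g := fun v => |(F + G : H2) v|)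
    (ae_of_all _ fun v => abs_nonneg _) (ae_of_all _ fun v => abs_nonneg _) (h1 _) (h1 _)
  have h2 : ∀ (F : H2), (∫ v, |F v| ^ (2:ℝ)) ^ (1 / (2:ℝ)) = ‖F‖ := fun F => by
    simp only [Real.rpow_two, sq_abs]
    rw [← H2_norm_sq, ← Real.sqrt_eq_rpow, Real.sqrt_sq (norm_nonneg _)]
  rw [h2, h2] at this
  refine le_trans (integral_mono_of_nonneg (ae_of_all _ fun v => norm_nonneg _) ?_ (ae_of_all _ ?_)) this
  · have := (Lp.memLp (F - G)).norm.integrable_mul (Lp.memLp (F + G)).norm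
    exact this
  · intro v
    simp only [norm_mul, Complex.norm_real, Real.norm_eq_abs]
    exact mul_le_of_le_one_left (by positivity) (hb v)

lemma QF_UG {w : V2 → ℂ} (hw : Measurable w) (g : GD) (z : ℂ)
    (hg : ∀ v, w ((g : Matrix (Fin 2) (Fin 2) ℂ).mulVec v) = z * w v) (F : H2) :
    z * QF w (UG g F) = QF w F := by
  unfold QF
  rw [← integral_const_mul]
  have key : ∀ f : V2 → ℂ, AEStronglyMeasurable f volume →
      ∫ v, f v = ∫ v, f ((g : Matrix (Fin 2) (Fin 2) ℂ).mulVec v) := by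
    intro f hf
    conv_lhs => rw [← (GD_mp g).map_eq]
    rw [integral_map (GD_mp g).measurable.aemeasurable]
    rw [(GD_mp g).map_eq]; exact hf
  rw [key (fun v => w v * ((F v ^ 2 : ℝ) : ℂ))]
  · apply integral_congr_ae
    filter_upwards [UG_coe g F] with v hv
    rw [hv, hg]; ring
  · exact hw.aestronglyMeasurable.mul
      (Complex.continuous_ofReal.comp_aestronglyMeasurable ((Lp.aestronglyMeasurable F).pow 2))


section avg
variable {Z : Type*} [TopologicalSpace Z] [MeasurableSpace Z] [OpensMeasurableSpace Z]
  [SecondCountableTopology Z]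

def PA (ν : Measure Z) (g : Z → GD) (F : H2) : H2 := ∫ θ, UG (g θ) F ∂ν

lemma PA_int (ν : Measure Z) [IsProbabilityMeasure ν] {g : Z → GD} (hg : Continuous g) (F : H2) :
    Integrable (fun θ => UG (g θ) F) ν :=
  Integrable.of_bound (UG_cont hg continuous_const).aestronglyMeasurable ‖F‖
    (ae_of_all _ fun θ => by simp)

lemma PA_norm (ν : Measure Z) [IsProbabilityMeasure ν] (g : Z → GD) (F : H2) :
    ‖PA ν g F‖ ≤ ‖F‖ := by
  have := norm_integral_le_of_norm_le_const (μ := ν) (f := fun θ => UG (g θ) F) (C := ‖F‖)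
    (ae_of_all _ fun θ => by simp)
  simpa [PA] using this

lemma PA_var_int (ν : Measure Z) [IsProbabilityMeasure ν] {g : Z → GD} (hg : Continuous g)
    (F G : H2) : Integrable (fun θ => ‖UG (g θ) F - G‖ ^ 2) ν := by
  refine Integrable.of_bound (((UG_cont hg continuous_const).sub continuous_const).norm.pow 2).aestronglyMeasurable
    ((‖F‖ + ‖G‖) ^ 2) (ae_of_all _ fun θ => ?_)
  rw [Real.norm_of_nonneg (by positivity)]
  gcongr
  refine (norm_sub_le _ _).trans (by simp)

lemma PA_var (ν : Measure Z) [IsProbabilityMeasure ν] {g : Z → GD} (hg : Continuous g) (F : H2) :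
    ∫ θ, ‖UG (g θ) F - PA ν g F‖ ^ 2 ∂ν = ‖F‖ ^ 2 - ‖PA ν g F‖ ^ 2 := by
  have e : ∀ θ, ‖UG (g θ) F - PA ν g F‖ ^ 2
      = (‖F‖ ^ 2 + ‖PA ν g F‖ ^ 2) - 2 * ⟪PA ν g F, UG (g θ) F⟫_ℝ := fun θ => by
    rw [norm_sub_sq_real, real_inner_comm, LinearIsometry.norm_map]; ring
  simp_rw [e]
  have hi := PA_int ν hg F
  rw [integral_sub (integrable_const _) ((hi.const_inner _).const_mul _), integral_const_mul,
    integral_inner hi]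
  change _ - 2 * ⟪PA ν g F, PA ν g F⟫_ℝ = _
  rw [real_inner_self_eq_norm_sq]
  simp; ring

/-- `e` is nondegenerate under `ν`. -/
def NonDeg (ν : Measure Z) (e : Z → ℂ) (κ : ℝ) : Prop :=
  ∀ W W' : ℂ, κ * ‖W‖ ^ 2 ≤ ∫ θ, ‖W - e θ * W'‖ ^ 2 ∂ν

lemma QF_key (ν : Measure Z) [IsProbabilityMeasure ν] {g : Z → GD} (hg : Continuous g)
    {e : Z → ℂ} (he : Continuous e) (he1 : ∀ θ, ‖e θ‖ = 1)
    {w : V2 → ℂ} (hw : Measurable w) (hb : ∀ v, ‖w v‖ ≤ 1)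
    (hwg : ∀ θ v, w ((g θ : Matrix (Fin 2) (Fin 2) ℂ).mulVec v) = e θ * w v)
    {κ : ℝ} (hκ : NonDeg ν e κ) (F : H2) :
    κ * ‖QF w F‖ ^ 2 ≤ 4 * ‖F‖ ^ 2 * (‖F‖ ^ 2 - ‖PA ν g F‖ ^ 2) ∧
    ‖QF w (PA ν g F)‖ ^ 2 ≤ 2 * ‖QF w F‖ ^ 2 + 8 * ‖F‖ ^ 2 * (‖F‖ ^ 2 - ‖PA ν g F‖ ^ 2) := by
  set W := QF w F with hW
  set W' := QF w (PA ν g F) with hW'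
  have hint : Integrable (fun θ => ‖W - e θ * W'‖ ^ 2) ν := by
    refine Integrable.of_bound (by fun_prop : Continuous fun θ => ‖W - e θ * W'‖ ^ 2).aestronglyMeasurable
      ((‖W‖ + ‖W'‖) ^ 2) (ae_of_all _ fun θ => ?_)
    rw [Real.norm_of_nonneg (by positivity)]
    gcongr
    refine (norm_sub_le _ _).trans (by simp [he1])
  have hpt : ∀ θ, ‖W - e θ * W'‖ ^ 2 ≤ 4 * ‖F‖ ^ 2 * ‖UG (g θ) F - PA ν g F‖ ^ 2 := by
    intro θ
    have h1 : W - e θ * W' = e θ * (QF w (UG (g θ) F) - W') := by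
      rw [mul_sub, QF_UG hw (g θ) (e θ) (hwg θ)]
    have h2 := QF_diff hw hb (UG (g θ) F) (PA ν g F)
    have h3 : ‖UG (g θ) F + PA ν g F‖ ≤ 2 * ‖F‖ := by
      refine (norm_add_le _ _).trans ?_
      have := PA_norm ν g F
      rw [LinearIsometry.norm_map]; linarith
    rw [h1, norm_mul, he1, one_mul]
    calc _ ≤ (‖UG (g θ) F - PA ν g F‖ * (2 * ‖F‖)) ^ 2 := by
          gcongr; exact h2.trans (by gcongr)
      _ = _ := by ring
  have hmain : ∫ θ, ‖W - e θ * W'‖ ^ 2 ∂ν ≤ 4 * ‖F‖ ^ 2 * (‖F‖ ^ 2 - ‖PA ν g F‖ ^ 2) := by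
    rw [← PA_var ν hg F, ← integral_const_mul]
    exact integral_mono hint ((PA_var_int ν hg F _).const_mul _) hpt
  refine ⟨(hκ W W').trans hmain, ?_⟩
  have h4 : ∀ θ, ‖W'‖ ^ 2 - 2 * ‖W‖ ^ 2 ≤ 2 * ‖W - e θ * W'‖ ^ 2 := by
    intro θ
    have : ‖W'‖ ≤ ‖W‖ + ‖W - e θ * W'‖ := by
      have := norm_sub_le W (W - e θ * W')
      simpa [he1] using this
    have h5 : ‖W'‖ ^ 2 ≤ (‖W‖ + ‖W - e θ * W'‖) ^ 2 := by gcongr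
    nlinarith [sq_nonneg (‖W‖ - ‖W - e θ * W'‖)]
  have h6 := integral_mono (integrable_const _) (hint.const_mul 2) h4
  rw [integral_const_mul] at h6
  simp at h6
  linarith
end avg


lemma ec_norm (a : Torus) : ‖ec a‖ = 1 := by
  unfold ec; exact Circle.norm_coe _
lemma ec_cont : Continuous ec := continuous_subtype_val.comp AddCircle.continuous_toCircle
lemma ec_add (a b : Torus) : ec (a + b) = ec a * ec b := by simp [ec, AddCircle.toCircle_add]
lemma ec_zero : ec 0 = 1 := by simp [ec]

def MA (t r : ℝ) (θ : Torus) : GD :=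
  ⟨!![1, (r/t : ℝ) * (1 - ec θ); 0, ec θ], by
    change ‖_‖ = 1
    rw [Matrix.det_fin_two_of]; simp [ec_norm]⟩

def MB (t r : ℝ) (η : Torus) : GD :=
  ⟨!![-ec (-η), 0; (r/t : ℝ) * (1 - ec (-η)), -1], by
    change ‖_‖ = 1
    rw [Matrix.det_fin_two_of]; simp [ec_norm]⟩

lemma MA_cont (t r : ℝ) : Continuous (MA t r) := by
  have := ec_cont
  refine Continuous.subtype_mk ?_ _
  refine continuous_matrix fun i j => ?_
  fin_cases i <;> fin_cases j <;> simp <;> fun_prop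

lemma MB_cont (t r : ℝ) : Continuous (MB t r) := by
  have := ec_cont
  refine Continuous.subtype_mk ?_ _
  refine continuous_matrix fun i j => ?_
  fin_cases i <;> fin_cases j <;> simp <;> fun_prop

lemma T_eq (t r : ℝ) (ht : 0 < t) (hrt : r^2 + t^2 = 1) (θ η : Torus) :
    TmatA t r θ η = ((MB t r η * MA t r θ : GD) : Matrix (Fin 2) (Fin 2) ℂ) := by
  have htc : (t : ℂ) ≠ 0 := by exact_mod_cast ht.ne'
  have hc : (r:ℂ)^2 + t^2 = 1 := by exact_mod_cast hrt
  rw [Submonoid.coe_mul]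
  simp only [TmatA, MB, MA, sub_eq_add_neg, ec_add, Matrix.mul_fin_two]
  ext i j
  fin_cases i <;> fin_cases j <;> simp <;> field_simp
  · ring
  · linear_combination (ec θ) * hc

def wq (α β : ℂ) : ℂ := 2 * (starRingEnd ℂ) α * β / ((‖α‖ ^ 2 + ‖β‖ ^ 2 : ℝ) : ℂ)

lemma wq_norm (α β : ℂ) : ‖wq α β‖ ≤ 1 := by
  unfold wq
  rw [norm_div, Complex.norm_real, Real.norm_of_nonneg (by positivity)]
  apply div_le_one_of_le₀ _ (by positivity)
  simp
  nlinarith [sq_nonneg (‖α‖ - ‖β‖)]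

lemma wq_smul (α β z : ℂ) (hz : ‖z‖ = 1) : wq α (z * β) = z * wq α β := by
  unfold wq; rw [norm_mul, hz, one_mul]; ring

lemma wq_neg (α β : ℂ) : wq (-α) (-β) = wq α β := by
  unfold wq; simp

def wA (t r : ℝ) (v : V2) : ℂ := - wq (v 0 + (r / t : ℝ) * v 1) (v 1 / t)
def wB (t r : ℝ) (v : V2) : ℂ := wq (v 1 - (r / t : ℝ) * v 0) (v 0 / t)

lemma wA_norm (t r : ℝ) (v : V2) : ‖wA t r v‖ ≤ 1 := by unfold wA; rw [norm_neg]; exact wq_norm _ _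
lemma wB_norm (t r : ℝ) (v : V2) : ‖wB t r v‖ ≤ 1 := wq_norm _ _
lemma wA_meas (t r : ℝ) : Measurable (wA t r) := by
  have : Measurable (starRingEnd ℂ) := Complex.continuous_conj.measurable
  unfold wA wq; fun_prop
lemma wB_meas (t r : ℝ) : Measurable (wB t r) := by
  have : Measurable (starRingEnd ℂ) := Complex.continuous_conj.measurable
  unfold wB wq; fun_prop

lemma wA_eq (t r : ℝ) (θ : Torus) (v : V2) :
    wA t r ((MA t r θ : Matrix (Fin 2) (Fin 2) ℂ).mulVec v) = ec θ * wA t r v := by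
  unfold wA
  rw [mul_neg, ← wq_smul _ _ _ (ec_norm θ)]
  simp only [MA]
  simp [Matrix.vecHead, Matrix.vecTail]
  congr 1 <;> ring

lemma wB_eq (t r : ℝ) (η : Torus) (v : V2) :
    wB t r ((MB t r η : Matrix (Fin 2) (Fin 2) ℂ).mulVec v) = ec (-η) * wB t r v := by
  unfold wB
  rw [← wq_smul _ _ _ (ec_norm (-η)), ← wq_neg]
  simp only [MB]
  simp [Matrix.vecHead, Matrix.vecTail]
  congr 1 <;> ring

lemma sq0 (x y : ℝ) (h : x^2+y^2 ≤ 0) : x = 0 ∧ y = 0 :=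
  ⟨pow_eq_zero_iff two_ne_zero |>.1 (by linarith [sq_nonneg x, sq_nonneg y, le_antisymm (a := x^2) (b := 0) (by linarith [sq_nonneg y]) (sq_nonneg x)]),
   pow_eq_zero_iff two_ne_zero |>.1 (by linarith [sq_nonneg x, sq_nonneg y, le_antisymm (a := y^2) (b := 0) (by linarith [sq_nonneg x]) (sq_nonneg y)])⟩

lemma wAB_real (t r a b x y : ℝ) (ht : 0 < t) (hrt : r^2 + t^2 = 1)
    (hv' : 0 < a^2 + b^2 + (x^2 + y^2)) :
    ((1 + r^2)/t^2 + 2*r/t^2 * -(2 * ((a + r/t*x) * (x/t) + (b + r/t*y) * (y/t)) /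
      ((a + r/t*x)^2 + (b + r/t*y)^2 + ((x/t)^2 + (y/t)^2)))) *
    ((1 + r^2)/t^2 + 2*r/t^2 * (2 * ((x - r/t*a) * (a/t) + (y - r/t*b) * (b/t)) /
      ((x - r/t*a)^2 + (y - r/t*b)^2 + ((a/t)^2 + (b/t)^2)))) = 1 := by
  have e1 : (a + r/t*x)^2 + (b + r/t*y)^2 + ((x/t)^2 + (y/t)^2)
      = ((t*a + r*x)^2 + (t*b+r*y)^2 + (x^2+y^2)) / t^2 := by field_simp; try ring
  have e2 : (x - r/t*a)^2 + (y - r/t*b)^2 + ((a/t)^2 + (b/t)^2)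
      = ((t*x - r*a)^2 + (t*y-r*b)^2 + (a^2+b^2)) / t^2 := by field_simp; try ring
  have e3 : 2 * ((a + r/t*x) * (x/t) + (b + r/t*y) * (y/t))
      = 2 * ((t*a + r*x) * x + (t*b+r*y)*y) / t^2 := by field_simp; try ring
  have e4 : 2 * ((x - r/t*a) * (a/t) + (y - r/t*b) * (b/t))
      = 2 * ((t*x - r*a) * a + (t*y-r*b)*b) / t^2 := by field_simp; try ring
  rw [e1, e2, e3, e4]
  have pA : 0 < (t*a + r*x)^2 + (t*b+r*y)^2 + (x^2+y^2) := by
    by_contra hcon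
    obtain ⟨rfl, rfl⟩ := sq0 x y (by linarith [sq_nonneg (t*a + r*x), sq_nonneg (t*b+r*y)])
    obtain ⟨h1, h2⟩ := sq0 (t*a) (t*b) (by simpa using hcon)
    have h1 : a = 0 := by simpa [ht.ne'] using h1
    have h2 : b = 0 := by simpa [ht.ne'] using h2
    subst h1 h2; simp at hv'
  have pB : 0 < (t*x - r*a)^2 + (t*y-r*b)^2 + (a^2+b^2) := by
    by_contra hcon
    obtain ⟨rfl, rfl⟩ := sq0 a b (by linarith [sq_nonneg (t*x - r*a), sq_nonneg (t*y-r*b)])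
    obtain ⟨h1, h2⟩ := sq0 (t*x) (t*y) (by simpa using hcon)
    have h1 : x = 0 := by simpa [ht.ne'] using h1
    have h2 : y = 0 := by simpa [ht.ne'] using h2
    subst h1 h2; simp at hv'
  have iA : (1+r^2)*((t*a + r*x)^2 + (t*b+r*y)^2 + (x^2+y^2)) - 4*r*((t*a + r*x) * x + (t*b+r*y)*y)
      = t^2 * ((t*x - r*a)^2 + (t*y-r*b)^2 + (a^2+b^2)) := by
    linear_combination (2*t*r*(a*x+b*y) - (1-r^2+t^2)*(x^2+y^2)) * hrt
  have iB : (1+r^2)*((t*x - r*a)^2 + (t*y-r*b)^2 + (a^2+b^2)) + 4*r*((t*x - r*a) * a + (t*y-r*b)*b)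
      = t^2 * ((t*a + r*x)^2 + (t*b+r*y)^2 + (x^2+y^2)) := by
    linear_combination (-2*t*r*(a*x+b*y) - (1-r^2+t^2)*(a^2+b^2)) * hrt
  generalize (t*a + r*x)^2 + (t*b+r*y)^2 + (x^2+y^2) = NA at *
  generalize (t*x - r*a)^2 + (t*y-r*b)^2 + (a^2+b^2) = NB at *
  generalize (t*a + r*x) * x + (t*b+r*y)*y = z at *
  generalize (t*x - r*a) * a + (t*y-r*b)*b = z' at *
  have hA : (1 + r^2)/t^2 + 2*r/t^2 * -(2 * z / t^2 / (NA / t^2)) = NB / NA := by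
    field_simp; linarith
  have hB : (1 + r^2)/t^2 + 2*r/t^2 * (2 * z' / t^2 / (NB / t^2)) = NA / NB := by
    field_simp; linarith
  rw [hA, hB]
  field_simp

lemma wAB (t r : ℝ) (ht : 0 < t) (hrt : r^2 + t^2 = 1) (v : V2) (hv : v ≠ 0) :
    ((1 + r^2)/t^2 + 2*r/t^2 * (wA t r v).re) * ((1 + r^2)/t^2 + 2*r/t^2 * (wB t r v).re) = 1 := by
  have hre : ∀ α β : ℂ, (wq α β).re
      = 2 * (α.re * β.re + α.im * β.im) / (α.re^2 + α.im^2 + (β.re^2 + β.im^2)) := by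
    intro α β
    unfold wq
    rw [← Complex.normSq_eq_norm_sq, ← Complex.normSq_eq_norm_sq, Complex.div_ofReal_re]
    simp [Complex.normSq_apply]; ring
  have hv' : 0 < (v 0).re^2 + (v 0).im^2 + ((v 1).re^2 + (v 1).im^2) := by
    by_contra hcon
    apply hv
    obtain ⟨h1, h2⟩ := sq0 (v 0).re (v 0).im (by linarith [sq_nonneg (v 1).re, sq_nonneg (v 1).im])
    obtain ⟨h3, h4⟩ := sq0 (v 1).re (v 1).im (by linarith [sq_nonneg (v 0).re, sq_nonneg (v 0).im])
    ext i; fin_cases i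
    · exact Complex.ext h1 h2
    · exact Complex.ext h3 h4
  unfold wA wB
  rw [Complex.neg_re, hre, hre]
  have e1 : ∀ z : ℂ, (z / (t:ℂ)).re = z.re / t := fun z => Complex.div_ofReal_re z t
  have e2 : ∀ z : ℂ, (z / (t:ℂ)).im = z.im / t := fun z => Complex.div_ofReal_im z t
  simp only [e1, e2, Complex.add_re, Complex.sub_re, Complex.add_im, Complex.sub_im,
    Complex.re_ofReal_mul, Complex.im_ofReal_mul]
  exact wAB_real t r _ _ _ _ ht hrt hv'

lemma wAB_ineq (t r : ℝ) (ht : 0 < t) (hrt : r^2 + t^2 = 1) (v : V2) (hv : v ≠ 0) :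
    (2*r/t^2)^2/2 ≤ -((1 + r^2)/t^2 * (2*r/t^2)) * ((wA t r v).re + (wB t r v).re)
      + (2*r/t^2)^2/4 * (((wA t r v)^2).re + ((wB t r v)^2).re) := by
  have h := wAB t r ht hrt v hv
  have hc : ((1 + r^2)/t^2)^2 - (2*r/t^2)^2 = 1 := by
    field_simp
    have : t^2 = 1 - r^2 := by linarith
    rw [show t^4 = (t^2)^2 by ring, this]; ring
  have key : ∀ w : ℂ, ‖w‖ ≤ 1 → 2 * w.re^2 - 1 ≤ (w^2).re := by
    intro w hw
    have h2 : w.re^2 + w.im^2 ≤ 1 := by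
      have := Complex.normSq_eq_norm_sq w
      rw [Complex.normSq_apply] at this
      nlinarith [norm_nonneg w]
    rw [pow_two w, Complex.mul_re]; nlinarith
  have kA := key _ (wA_norm t r v)
  have kB := key _ (wB_norm t r v)
  generalize (1 + r^2)/t^2 = c at *
  generalize 2*r/t^2 = s at *
  generalize (wA t r v).re = p at *
  generalize (wB t r v).re = q at *
  have hs : 0 ≤ s^2/4 := by positivity
  nlinarith [mul_le_mul_of_nonneg_left kA hs, mul_le_mul_of_nonneg_left kB hs, mul_nonneg hs (sq_nonneg (p+q))]


lemma QF_lower (t r : ℝ) (ht : 0 < t) (hr : 0 < r) (hrt : r^2 + t^2 = 1) (G : H2) :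
    (2*r/t^2)^2/2 * ‖G‖^2 ≤ ((1 + r^2)/t^2 * (2*r/t^2)) * (‖QF (wA t r) G‖ + ‖QF (wB t r) G‖)
      + (2*r/t^2)^2/4 * (‖QF (fun v => wA t r v ^ 2) G‖ + ‖QF (fun v => wB t r v ^ 2) G‖) := by
  have hA2 : Measurable fun v => wA t r v ^ 2 := (wA_meas t r).pow_const 2
  have hB2 : Measurable fun v => wB t r v ^ 2 := (wB_meas t r).pow_const 2
  have nA2 : ∀ v, ‖wA t r v ^ 2‖ ≤ 1 := fun v => by
    rw [norm_pow]; exact pow_le_one₀ (norm_nonneg _) (wA_norm t r v)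
  have nB2 : ∀ v, ‖wB t r v ^ 2‖ ≤ 1 := fun v => by
    rw [norm_pow]; exact pow_le_one₀ (norm_nonneg _) (wB_norm t r v)
  have hre : ∀ w : V2 → ℂ, Measurable w → (∀ v, ‖w v‖ ≤ 1) →
      Integrable (fun v => (w v).re * G v ^ 2) ∧ ∫ v, (w v).re * G v ^ 2 = (QF w G).re := by
    intro w hw hb
    have hi := QF_integrable hw hb G
    have e : ∀ v, (w v).re * G v ^ 2 = RCLike.re (w v * ((G v ^ 2 : ℝ) : ℂ)) := fun v => by
      change _ = (w v * ((G v ^ 2 : ℝ) : ℂ)).re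
      rw [Complex.re_mul_ofReal]
    simp_rw [e]
    exact ⟨hi.re, integral_re hi⟩
  obtain ⟨i1, j1⟩ := hre _ (wA_meas t r) (wA_norm t r)
  obtain ⟨i2, j2⟩ := hre _ (wB_meas t r) (wB_norm t r)
  obtain ⟨i3, j3⟩ := hre _ hA2 nA2
  obtain ⟨i4, j4⟩ := hre _ hB2 nB2
  have hc : 0 ≤ (1 + r^2)/t^2 * (2*r/t^2) := by positivity
  have hs : 0 ≤ (2*r/t^2)^2/4 := by positivity
  have hpt := wAB_ineq t r ht hrt
  generalize (1 + r^2)/t^2 * (2*r/t^2) = C at *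
  generalize (2*r/t^2)^2/4 = D at *
  generalize (2*r/t^2)^2/2 = E at *
  have h : ∫ v, E * G v ^ 2 ≤ ∫ v, (-C * ((wA t r v).re * G v ^ 2 + (wB t r v).re * G v ^ 2)
      + D * ((wA t r v ^ 2).re * G v ^ 2 + (wB t r v ^ 2).re * G v ^ 2)) := by
    apply integral_mono_ae ((Lp.memLp G).integrable_sq.const_mul _)
      (((i1.add i2).const_mul (-C)).add ((i3.add i4).const_mul D))
    have : ∀ᵐ v : V2, v ≠ 0 := by
      rw [ae_iff]; simp
    filter_upwards [this] with v hv
    have := mul_le_mul_of_nonneg_right (hpt v hv) (sq_nonneg (G v))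
    simp only [Pi.add_apply]
    linarith
  have i12 : Integrable (fun v => (wA t r v).re * G v ^ 2 + (wB t r v).re * G v ^ 2) := i1.add i2
  have i34 : Integrable (fun v => (wA t r v ^ 2).re * G v ^ 2 + (wB t r v ^ 2).re * G v ^ 2) := i3.add i4
  rw [integral_add (i12.const_mul (-C)) (i34.const_mul D), integral_const_mul,
    integral_const_mul, integral_const_mul, integral_add i1 i2, integral_add i3 i4, j1, j2, j3, j4,
    ← H2_norm_sq] at h
  have a1 := (abs_le.1 (Complex.abs_re_le_norm (QF (wA t r) G))).1
  have a2 := (abs_le.1 (Complex.abs_re_le_norm (QF (wB t r) G))).1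
  have a3 := (abs_le.1 (Complex.abs_re_le_norm (QF (fun v => wA t r v ^ 2) G))).2
  have a4 := (abs_le.1 (Complex.abs_re_le_norm (QF (fun v => wB t r v ^ 2) G))).2
  have b1 := mul_le_mul_of_nonneg_left (add_le_add a1 a2) hc
  have b2 := mul_le_mul_of_nonneg_left (add_le_add a3 a4) hs
  linarith

lemma gap (t r : ℝ) (ht : 0 < t) (hr : 0 < r) (hrt : r^2 + t^2 = 1) (ν : Measure Torus)
    [IsProbabilityMeasure ν] (α : Torus) (κ : ℝ) (hκ : 0 < κ)
    (h1 : NonDeg ν (fun θ => ec (θ + α)) κ) (h2 : NonDeg ν (fun θ => ec (θ + α) ^ 2) κ)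
    (h3 : NonDeg ν (fun θ => ec (-(θ + α))) κ) (h4 : NonDeg ν (fun θ => ec (-(θ + α)) ^ 2) κ) :
    ∃ q : ℝ, 0 < q ∧ q < 1 ∧ ∀ F : H2,
      ‖PA ν (fun θ => MA t r (θ + α)) (PA ν (fun θ => MB t r (θ + α)) F)‖ ≤ q * ‖F‖ := by
  have hA2 : Measurable fun v => wA t r v ^ 2 := (wA_meas t r).pow_const 2
  have hB2 : Measurable fun v => wB t r v ^ 2 := (wB_meas t r).pow_const 2
  have nA2 : ∀ v, ‖wA t r v ^ 2‖ ≤ 1 := fun v => by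
    rw [norm_pow]; exact pow_le_one₀ (norm_nonneg _) (wA_norm t r v)
  have nB2 : ∀ v, ‖wB t r v ^ 2‖ ≤ 1 := fun v => by
    rw [norm_pow]; exact pow_le_one₀ (norm_nonneg _) (wB_norm t r v)
  have hec := ec_cont
  have cA : Continuous fun θ => MA t r (θ + α) := (MA_cont t r).comp (by fun_prop)
  have cB : Continuous fun θ => MB t r (θ + α) := (MB_cont t r).comp (by fun_prop)
  set gA := fun θ => MA t r (θ + α)
  set gB := fun θ => MB t r (θ + α)
  set K : ℝ := 8 / κ + 8 with hK
  set L : ℝ := 2 * ((1 + r^2)/t^2 * (2*r/t^2)) + 2 * ((2*r/t^2)^2/4) with hL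
  have hKpos : 0 < K := by positivity
  have hLpos : 0 < L := by positivity
  set S : ℝ := (2*r/t^2)^2/2 with hS
  have hSpos : 0 < S := by positivity
  -- the main inequality
  have main : ∀ F : H2, S * (‖F‖^2 - (‖F‖^2 - ‖PA ν gA (PA ν gB F)‖^2)) ≤
      L * √(K * (‖F‖^2 * (‖F‖^2 - ‖PA ν gA (PA ν gB F)‖^2))) := by
    intro F
    set G := PA ν gB F with hG
    have hGF : ‖G‖ ≤ ‖F‖ := PA_norm ν gB F
    have hPG : ‖PA ν gA G‖ ≤ ‖G‖ := PA_norm ν gA G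
    have hGF2 : ‖G‖^2 ≤ ‖F‖^2 := by gcongr
    have hPG2 : ‖PA ν gA G‖^2 ≤ ‖G‖^2 := by gcongr
    set D := ‖F‖^2 - ‖PA ν gA G‖^2 with hD
    have low := QF_lower t r ht hr hrt G
    have bA : ∀ (w : V2 → ℂ) (e : Torus → ℂ), Continuous e → (∀ θ, ‖e θ‖ = 1) → Measurable w →
        (∀ v, ‖w v‖ ≤ 1) →
        (∀ θ v, w ((gA θ : Matrix (Fin 2) (Fin 2) ℂ).mulVec v) = e θ * w v) → NonDeg ν e κ →
        ‖QF w G‖ ≤ √(K * (‖F‖^2 * D)) := by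
      intro w e he he1 hw hb hwg hnd
      have := (QF_key ν cA he he1 hw hb hwg hnd G).1
      apply Real.le_sqrt_of_sq_le
      have hx : κ * ‖QF w G‖^2 ≤ 4 * (‖F‖^2 * D) := by
        refine this.trans ?_
        rw [mul_assoc]
        gcongr
        linarith
      have hx0 : 0 ≤ ‖F‖^2 * D := mul_nonneg (sq_nonneg _) (by rw [hD]; linarith)
      have : ‖QF w G‖^2 ≤ 4 / κ * (‖F‖^2 * D) := by
        rw [div_mul_eq_mul_div, le_div_iff₀ hκ]; linarith
      refine this.trans ?_
      gcongr
      rw [hK]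
      have : 4 / κ ≤ 8 / κ := by gcongr; norm_num
      linarith
    have bB : ∀ (w : V2 → ℂ) (e : Torus → ℂ), Continuous e → (∀ θ, ‖e θ‖ = 1) → Measurable w →
        (∀ v, ‖w v‖ ≤ 1) →
        (∀ θ v, w ((gB θ : Matrix (Fin 2) (Fin 2) ℂ).mulVec v) = e θ * w v) → NonDeg ν e κ →
        ‖QF w G‖ ≤ √(K * (‖F‖^2 * D)) := by
      intro w e he he1 hw hb hwg hnd
      obtain ⟨k1, k2⟩ := QF_key ν cB he he1 hw hb hwg hnd F
      apply Real.le_sqrt_of_sq_le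
      have hz : ‖F‖^2 * (‖F‖^2 - ‖G‖^2) ≤ ‖F‖^2 * D := by
        gcongr; rw [hD]; linarith
      have : ‖QF w F‖^2 ≤ 4 / κ * (‖F‖^2 * D) := by
        rw [div_mul_eq_mul_div, le_div_iff₀ hκ]; linarith
      have e8 : K * (‖F‖^2 * D) = 2 * (4 / κ * (‖F‖^2 * D)) + 8 * (‖F‖^2 * D) := by
        rw [hK]; ring
      linarith
    have b1 := bA (wA t r) (fun θ => ec (θ + α)) (by fun_prop) (fun θ => ec_norm _) (wA_meas t r)
      (wA_norm t r) (fun θ v => wA_eq t r _ v) h1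
    have b2 := bA (fun v => wA t r v ^ 2) (fun θ => ec (θ + α) ^ 2) (by fun_prop)
      (fun θ => by rw [norm_pow, ec_norm, one_pow]) hA2 nA2
      (fun θ v => by rw [← mul_pow]; exact congrArg (· ^ 2) (wA_eq t r _ v)) h2
    have b3 := bB (wB t r) (fun θ => ec (-(θ + α))) (by fun_prop) (fun θ => ec_norm _) (wB_meas t r)
      (wB_norm t r) (fun θ v => wB_eq t r _ v) h3
    have b4 := bB (fun v => wB t r v ^ 2) (fun θ => ec (-(θ + α)) ^ 2) (by fun_prop)
      (fun θ => by rw [norm_pow, ec_norm, one_pow]) hB2 nB2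
      (fun θ v => by rw [← mul_pow]; exact congrArg (· ^ 2) (wB_eq t r _ v)) h4
    have c1 := mul_le_mul_of_nonneg_left (add_le_add b1 b3)
      (by positivity : 0 ≤ (1 + r^2)/t^2 * (2*r/t^2))
    have c2 := mul_le_mul_of_nonneg_left (add_le_add b2 b4) (by positivity : 0 ≤ (2*r/t^2)^2/4)
    have c3 : S * (‖F‖^2 - D) ≤ S * ‖G‖^2 := by
      gcongr; rw [hD]; linarith
    exact c3.trans (low.trans ((add_le_add c1 c2).trans (le_of_eq (by rw [hL]; ring))))
  set ε : ℝ := min (1/2) (S^2 / (8 * L^2 * K)) with hε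
  have hε0 : 0 < ε := by positivity
  have hε1 : ε ≤ 1/2 := min_le_left _ _
  have hε2 : ε * (8 * L^2 * K) ≤ S^2 := by
    rw [← le_div_iff₀ (by positivity)]; exact min_le_right _ _
  refine ⟨√(1 - ε), Real.sqrt_pos.2 (by linarith), ?_, ?_⟩
  · rw [Real.sqrt_lt' one_pos]; linarith
  intro F
  by_cases hF : F = 0
  · subst hF
    have e1 : PA ν gB (0 : H2) = 0 := by simp [PA]
    have e2 : PA ν gA (0 : H2) = 0 := by simp [PA]
    rw [e1, e2]; simp
  have hFpos : 0 < ‖F‖^2 := by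
    have := norm_pos_iff.2 hF
    positivity
  have hm := main F
  rw [← Real.sqrt_sq (norm_nonneg (PA ν gA (PA ν gB F))), ← Real.sqrt_sq (norm_nonneg F),
    ← Real.sqrt_mul (by linarith)]
  apply Real.sqrt_le_sqrt
  by_contra hcon
  push Not at hcon
  set D := ‖F‖^2 - ‖PA ν gA (PA ν gB F)‖^2 with hD
  have hDlt : D < ε * ‖F‖^2 := by rw [hD]; linarith
  have h5 : S * (‖F‖^2 / 2) < S * (‖F‖^2 - D) := by
    gcongr; nlinarith
  have h6 : L * √(K * (‖F‖^2 * D)) ≤ L * √(K * (‖F‖^2 * (ε * ‖F‖^2))) := by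
    gcongr
  have h7 : √(K * (‖F‖^2 * (ε * ‖F‖^2))) = √(K * ε) * ‖F‖^2 := by
    rw [show K * (‖F‖^2 * (ε * ‖F‖^2)) = (K * ε) * (‖F‖^2)^2 by ring,
      Real.sqrt_mul (by positivity), Real.sqrt_sq hFpos.le]
  rw [h7] at h6
  have h8 : S / 2 < L * √(K * ε) := by
    have : S / 2 * ‖F‖^2 < L * √(K * ε) * ‖F‖^2 := by linarith
    exact lt_of_mul_lt_mul_right this hFpos.le
  have h9 : (S/2)^2 < (L * √(K * ε))^2 := by gcongr
  rw [mul_pow, Real.sq_sqrt (by positivity)] at h9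
  nlinarith [sq_nonneg S]


lemma nondeg_of {ν : Measure Torus} [IsProbabilityMeasure ν] {e : Torus → ℂ} (he : Continuous e)
    (he1 : ∀ θ, ‖e θ‖ = 1) {x y : Torus} (hx : x ∈ measSupport ν) (hy : y ∈ measSupport ν)
    (hxy : e x ≠ e y) : ∃ κ > 0, NonDeg ν e κ := by
  set d := ‖e x - e y‖ with hd
  have hdpos : 0 < d := norm_pos_iff.2 (sub_ne_zero.2 hxy)
  have hU : ∀ x, x ∈ measSupport ν → 0 < ν.real {u | ‖e u - e x‖ < d / 4} := by
    intro x hx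
    have h1 : {u | ‖e u - e x‖ < d / 4} ∈ nhds x :=
      (isOpen_lt (by fun_prop) continuous_const).mem_nhds (by simp; positivity)
    exact ENNReal.toReal_pos (hx _ h1).ne' (measure_ne_top _ _)
  have hx' := hU x hx
  have hy' := hU y hy
  set a := ν.real {u | ‖e u - e x‖ < d / 4}
  set b := ν.real {u | ‖e u - e y‖ < d / 4}
  refine ⟨min a b * (d / 4) ^ 2, by positivity, ?_⟩
  intro W W'
  have hint : Integrable (fun θ => ‖W - e θ * W'‖ ^ 2) ν := by
    refine Integrable.of_bound (by fun_prop : Continuous fun θ => ‖W - e θ * W'‖ ^ 2).aestronglyMeasurable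
      ((‖W‖ + ‖W'‖) ^ 2) (ae_of_all _ fun θ => ?_)
    rw [Real.norm_of_nonneg (by positivity)]
    gcongr
    refine (norm_sub_le _ _).trans (by simp [he1])
  have mk := mul_meas_ge_le_integral_of_nonneg (μ := ν) (f := fun θ => ‖W - e θ * W'‖ ^ 2)
    (ae_of_all _ fun θ => by positivity) hint ((d / 4) ^ 2 * ‖W‖ ^ 2)
  refine le_trans ?_ mk
  have hsub : ({u | ‖e u - e x‖ < d / 4} ⊆ {θ | (d / 4) ^ 2 * ‖W‖ ^ 2 ≤ ‖W - e θ * W'‖ ^ 2}) ∨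
      ({u | ‖e u - e y‖ < d / 4} ⊆ {θ | (d / 4) ^ 2 * ‖W‖ ^ 2 ≤ ‖W - e θ * W'‖ ^ 2}) := by
    by_contra hcon
    push Not at hcon
    obtain ⟨h1, h2⟩ := hcon
    obtain ⟨u, hu, hu'⟩ := Set.not_subset.1 h1
    obtain ⟨v, hv, hv'⟩ := Set.not_subset.1 h2
    simp only [Set.mem_ofPred_eq, not_le] at hu hv hu' hv'
    rw [← mul_pow] at hu' hv'
    have hu2 := lt_of_pow_lt_pow_left₀ 2 (by positivity) hu'
    have hv2 := lt_of_pow_lt_pow_left₀ 2 (by positivity) hv'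
    have k1 : (e v - e u) * W = e v * (W - e u * W') - e u * (W - e v * W') := by ring
    have k2 : ‖e v - e u‖ * ‖W‖ ≤ ‖W - e u * W'‖ + ‖W - e v * W'‖ := by
      rw [← norm_mul, k1]
      refine (norm_sub_le _ _).trans ?_
      simp [he1]
    have k3 : d ≤ ‖e v - e u‖ + ‖e u - e x‖ + ‖e v - e y‖ := by
      have : e x - e y = -(e u - e x) + (-(e v - e u) + (e v - e y)) := by ring
      rw [hd, this]
      refine (norm_add_le _ _).trans ?_
      have := norm_add_le (-(e v - e u)) (e v - e y)
      rw [norm_neg] at *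
      linarith
    have k4 : d / 2 ≤ ‖e v - e u‖ := by linarith
    have k5 := mul_le_mul_of_nonneg_right k4 (norm_nonneg W)
    linarith
  rw [mul_assoc, mul_comm]
  gcongr
  rcases hsub with h | h
  · exact (min_le_left _ _).trans (measureReal_mono h)
  · exact (min_le_right _ _).trans (measureReal_mono h)

lemma supp_pts {ν : Measure Torus} (hsupp : (interior (measSupport ν)).Nonempty) :
    ∃ x ∈ measSupport ν, ∃ δ : ℝ, x + (δ : Torus) ∈ measSupport ν ∧ ec (δ : Torus) ^ 2 ≠ 1 := by
  obtain ⟨x, hx⟩ := hsupp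
  refine ⟨x, interior_subset hx, ?_⟩
  have hc : Continuous fun δ : ℝ => x + (δ : Torus) :=
    continuous_const.add (AddCircle.continuous_mk' _)
  have hm : (fun δ : ℝ => x + (δ : Torus)) ⁻¹' interior (measSupport ν) ∈ nhds (0:ℝ) :=
    (isOpen_interior.preimage hc).mem_nhds (by simpa using hx)
  obtain ⟨ε, hε, hball⟩ := Metric.mem_nhds_iff.1 hm
  set δ := min (ε / 2) 1 with hδ
  have hδ0 : 0 < δ := by positivity
  have hδ1 : δ ≤ 1 := min_le_right _ _
  refine ⟨δ, interior_subset (hball ?_), ?_⟩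
  · simp only [Metric.mem_ball, dist_zero_right, Real.norm_eq_abs, abs_of_pos hδ0]
    exact (min_le_left _ _).trans_lt (by linarith)
  · intro h
    rw [pow_two, ← ec_add, ← ec_zero] at h
    have h2 : ((δ : Torus) + (δ : Torus)) = 0 :=
      AddCircle.injective_toCircle (by positivity) (Subtype.ext h)
    rw [← AddCircle.coe_add] at h2
    obtain ⟨n, hn⟩ := (AddCircle.coe_eq_zero_iff _).1 h2
    rw [zsmul_eq_mul] at hn
    have hpi := Real.pi_gt_three
    have n0 : (0:ℝ) < n := by
      by_contra hneg
      push Not at hneg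
      nlinarith
    have n1 : (n:ℝ) < 1 := by nlinarith
    have : 0 < n := by exact_mod_cast n0
    have : n < 1 := by exact_mod_cast n1
    omega

lemma NonDeg.mono {ν : Measure Torus} {e : Torus → ℂ} {κ κ' : ℝ} (h : NonDeg ν e κ) (hk : κ' ≤ κ) :
    NonDeg ν e κ' := fun W W' => (by gcongr : κ' * ‖W‖^2 ≤ κ * ‖W‖^2).trans (h W W')

lemma nondeg_all {ν : Measure Torus} [IsProbabilityMeasure ν]
    (hsupp : (interior (measSupport ν)).Nonempty) (α : Torus) : ∃ κ > 0,
    NonDeg ν (fun θ => ec (θ + α)) κ ∧ NonDeg ν (fun θ => ec (θ + α) ^ 2) κ ∧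
    NonDeg ν (fun θ => ec (-(θ + α))) κ ∧ NonDeg ν (fun θ => ec (-(θ + α)) ^ 2) κ := by
  obtain ⟨x, hx, δ, hy, hδ⟩ := supp_pts hsupp
  have hec := ec_cont
  have hne : ∀ a, ec a ≠ 0 := fun a h => by have := ec_norm a; rw [h] at this; simp at this
  have inv : ∀ a, ec (-a) = (ec a)⁻¹ := fun a => by
    apply eq_inv_of_mul_eq_one_left
    rw [← ec_add]; simp [ec_zero]
  have h2 : ec (x + α) ^ 2 ≠ ec (x + δ + α) ^ 2 := by
    intro h
    rw [show x + (δ:Torus) + α = (x + α) + δ by abel, ec_add (x + α), mul_pow] at h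
    exact hδ (mul_left_cancel₀ (pow_ne_zero 2 (hne (x + α))) (by rw [← h, mul_one]))
  have h4 : ec (-(x + α)) ^ 2 ≠ ec (-(x + δ + α)) ^ 2 := by
    rw [inv, inv, inv_pow, inv_pow]
    exact fun h => h2 (inv_injective h)
  obtain ⟨k1, p1, n1⟩ := nondeg_of (ν := ν) (e := fun θ => ec (θ + α)) (by fun_prop)
    (fun _ => ec_norm _) hx hy (fun h => h2 (congrArg (· ^ 2) h))
  obtain ⟨k2, p2, n2⟩ := nondeg_of (ν := ν) (e := fun θ => ec (θ + α) ^ 2) (by fun_prop)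
    (fun _ => by rw [norm_pow, ec_norm, one_pow]) hx hy h2
  obtain ⟨k3, p3, n3⟩ := nondeg_of (ν := ν) (e := fun θ => ec (-(θ + α))) (by fun_prop)
    (fun _ => ec_norm _) hx hy (fun h => h4 (congrArg (· ^ 2) h))
  obtain ⟨k4, p4, n4⟩ := nondeg_of (ν := ν) (e := fun θ => ec (-(θ + α)) ^ 2) (by fun_prop)
    (fun _ => by rw [norm_pow, ec_norm, one_pow]) hx hy h4
  refine ⟨min (min k1 k2) (min k3 k4), by positivity, n1.mono ?_, n2.mono ?_, n3.mono ?_, n4.mono ?_⟩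
  · exact (min_le_left _ _).trans (min_le_left _ _)
  · exact (min_le_left _ _).trans (min_le_right _ _)
  · exact (min_le_right _ _).trans (min_le_left _ _)
  · exact (min_le_right _ _).trans (min_le_right _ _)


def PhiG (t r α : ℝ) (ω : ℤ → Torus) : ℕ → GD
  | 0 => 1
  | (k+1) => (MB t r (ω (2*k+1) + (α : Torus)) * MA t r (ω (2*k) + (α : Torus))) * PhiG t r α ω k

lemma Phi_eq (t r α : ℝ) (ht : 0 < t) (hrt : r^2 + t^2 = 1) (ω : ℤ → Torus) (k : ℕ) :
    Phi t r α ω k = (PhiG t r α ω k : Matrix (Fin 2) (Fin 2) ℂ) := by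
  induction k with
  | zero => simp [Phi, PhiG]
  | succ k ih => rw [Phi, PhiG, ih, T_eq t r ht hrt]; simp

lemma PhiG_cont (t r α : ℝ) (k : ℕ) : Continuous fun ω => PhiG t r α ω k := by
  induction k with
  | zero => exact continuous_const
  | succ k ih =>
    have h1 := (MB_cont t r).comp (f := fun ω : ℤ → Torus => ω (2*k+1) + (α : Torus)) (by fun_prop)
    have h2 := (MA_cont t r).comp (f := fun ω : ℤ → Torus => ω (2*k) + (α : Torus)) (by fun_prop)
    exact (h1.mul h2).mul ih

lemma PhiG_update (t r α : ℝ) (ω : ℤ → Torus) (j : ℤ) (x : Torus) (k : ℕ) (hk : 2 * (k : ℤ) ≤ j) :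
    PhiG t r α (Function.update ω j x) k = PhiG t r α ω k := by
  induction k with
  | zero => rfl
  | succ k ih =>
    push_cast at hk
    rw [PhiG, PhiG, ih (by omega), Function.update_of_ne (by omega), Function.update_of_ne (by omega)]

lemma PhiG_add (t r α : ℝ) (ω : ℤ → Torus) (m n : ℕ) :
    PhiG t r α ω (m + n) = PhiG t r α (fun i => ω (i + 2 * m)) n * PhiG t r α ω m := by
  induction n with
  | zero => simp [PhiG]
  | succ n ih =>
    rw [← add_assoc, PhiG, PhiG, ih, mul_assoc, mul_assoc, mul_assoc]
    congr 4 <;> (push_cast; ring_nf)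

def IsIid (ν : Measure Torus) (ℙ : Measure (ℤ → Torus)) : Prop :=
  ∀ (s : Finset ℤ) (A : ℤ → Set Torus), (∀ k, MeasurableSet (A k)) →
      ℙ {ω | ∀ k ∈ s, ω k ∈ A k} = ∏ k ∈ s, ν (A k)

lemma iid_unique {ν : Measure Torus} [IsProbabilityMeasure ν] {P Q : Measure (ℤ → Torus)}
    (hP : IsIid ν P) (hQ : IsIid ν Q) : P = Q := by
  rw [Measure.eq_infinitePi (fun _ : ℤ => ν) (ν := P) (fun s A hA => hP s A hA),
    Measure.eq_infinitePi (fun _ : ℤ => ν) (ν := Q) (fun s A hA => hQ s A hA)]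

lemma cyl_meas (s : Finset ℤ) (A : ℤ → Set Torus) (hA : ∀ k, MeasurableSet (A k)) :
    MeasurableSet {ω : ℤ → Torus | ∀ k ∈ s, ω k ∈ A k} :=
  MeasurableSet.pi s.countable_toSet (fun k _ => hA k)

lemma iid_shift {ν : Measure Torus} [IsProbabilityMeasure ν] {P : Measure (ℤ → Torus)}
    (hP : IsIid ν P) (m : ℤ) : P.map (fun ω i => ω (i + m)) = P := by
  refine iid_unique (ν := ν) ?_ hP
  intro s A hA
  have hm : Measurable (fun (ω : ℤ → Torus) (i : ℤ) => ω (i + m)) := by fun_prop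
  rw [Measure.map_apply hm (cyl_meas s A hA)]
  have := hP (s.map (addRightEmbedding m)) (fun k => A (k - m)) (fun k => hA _)
  simp only [Finset.prod_map, addRightEmbedding_apply, add_sub_cancel_right] at this
  rw [← this]
  congr 1
  ext ω
  simp

lemma upd_meas (j : ℤ) : Continuous (fun p : (ℤ → Torus) × Torus => Function.update p.1 j p.2) :=
  continuous_fst.update j continuous_snd

lemma iid_upd {ν : Measure Torus} [IsProbabilityMeasure ν] {P : Measure (ℤ → Torus)}
    [IsProbabilityMeasure P]
    (hP : IsIid ν P) (j : ℤ) :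
    (P.prod ν).map (fun p : (ℤ → Torus) × Torus => Function.update p.1 j p.2) = P := by
  refine iid_unique (ν := ν) ?_ hP
  intro s A hA
  have hm : Measurable (fun p : (ℤ → Torus) × Torus => Function.update p.1 j p.2) := by
    exact (upd_meas j).measurable
  rw [Measure.map_apply hm (cyl_meas s A hA)]
  have : (fun p : (ℤ → Torus) × Torus => Function.update p.1 j p.2) ⁻¹' {ω | ∀ k ∈ s, ω k ∈ A k}
      = {ω | ∀ k ∈ s.erase j, ω k ∈ A k} ×ˢ (if j ∈ s then A j else Set.univ) := by
    ext ⟨ω, x⟩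
    simp only [Set.mem_preimage, Set.mem_ofPred_eq, Set.mem_prod, Finset.mem_erase]
    constructor
    · intro h
      refine ⟨fun k hk => by simpa [hk.1] using h k hk.2, ?_⟩
      split_ifs with hj
      · simpa using h j hj
      · trivial
    · rintro ⟨h1, h2⟩ k hk
      by_cases hkj : k = j
      · subst hkj; simpa [hk] using h2
      · simpa [hkj] using h1 k ⟨hkj, hk⟩
  rw [this, Measure.prod_prod, hP _ A hA]
  split_ifs with hj
  · rw [Finset.prod_erase_mul _ _ hj]
  · rw [measure_univ, mul_one, Finset.erase_eq_of_notMem hj]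

lemma cont_int {X E : Type*} [TopologicalSpace X] [CompactSpace X] [MeasurableSpace X]
    [OpensMeasurableSpace X] [SecondCountableTopology X] [NormedAddCommGroup E]
    (P : Measure X) [IsProbabilityMeasure P] {f : X → E} (hf : Continuous f) : Integrable f P := by
  obtain ⟨C, hC⟩ := (isCompact_range hf).isBounded.exists_norm_le
  exact Integrable.of_bound hf.aestronglyMeasurable C
    (Eventually.of_forall fun x => hC _ ⟨x, rfl⟩)

lemma iid_fubini {ν : Measure Torus} [IsProbabilityMeasure ν] {P : Measure (ℤ → Torus)}
    [IsProbabilityMeasure P] (hP : IsIid ν P) (j : ℤ) {f : (ℤ → Torus) → H2} (hf : Continuous f) :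
    ∫ ω, f ω ∂P = ∫ ω, ∫ x, f (Function.update ω j x) ∂ν ∂P := by
  conv_lhs => rw [← iid_upd hP j]
  rw [integral_map (upd_meas j).measurable.aemeasurable hf.aestronglyMeasurable]
  exact integral_prod _ (cont_int _ (hf.comp (upd_meas j)))

lemma UG_int {ν : Measure Torus} [IsProbabilityMeasure ν] (g : GD) {f : Torus → H2}
    (hf : Continuous f) : ∫ x, UG g (f x) ∂ν = UG g (∫ x, f x ∂ν) :=
  (UG g).toContinuousLinearMap.integral_comp_comm (cont_int _ hf)

lemma E_UG {ν : Measure Torus} [IsProbabilityMeasure ν] {P : Measure (ℤ → Torus)}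
    [IsProbabilityMeasure P] (hP : IsIid ν P) (t r α q : ℝ) (hq : 0 ≤ q)
    (hgap : ∀ F, ‖PA ν (fun θ => MA t r (θ+(α : Torus))) (PA ν (fun θ => MB t r (θ+(α : Torus))) F)‖ ≤ q*‖F‖)
    (k : ℕ) (y : H2) :
    ‖∫ ω, UG (PhiG t r α ω k) y ∂P‖ ≤ q ^ k * ‖y‖ := by
  induction k generalizing y with
  | zero => 
    refine (norm_integral_le_integral_norm _).trans ?_
    simp
  | succ k ih =>
    have hA : Continuous fun θ : Torus => MA t r (θ+(α : Torus)) :=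
      (MA_cont t r).comp (by fun_prop)
    have hB : Continuous fun θ : Torus => MB t r (θ+(α : Torus)) :=
      (MB_cont t r).comp (by fun_prop)
    have e1 : ∫ ω, UG (PhiG t r α ω (k+1)) y ∂P = ∫ ω, UG (PhiG t r α ω k)
        (PA ν (fun θ => MA t r (θ+(α : Torus))) (PA ν (fun θ => MB t r (θ+(α : Torus))) y)) ∂P := by
      rw [iid_fubini hP (2*k+1) (UG_cont (PhiG_cont t r α (k+1)) continuous_const)]
      have : ∀ ω, ∫ x, UG (PhiG t r α (Function.update ω (2*k+1) x) (k+1)) y ∂ν =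
          UG (PhiG t r α ω k) (UG (MA t r (ω (2*k) + (α:Torus))) (PA ν (fun θ => MB t r (θ+(α : Torus))) y)) := by
        intro ω
        simp only [PhiG, UG_mul, PhiG_update t r α ω (2*k+1) _ k (by omega), Function.update_self]
        simp only [Function.update_of_ne (show (2*k:ℤ) ≠ 2*k+1 by omega)]
        have c1 := UG_cont hB (continuous_const (y := y))
        have c2 := UG_cont (continuous_const (y := MA t r (ω (2*k) + (α:Torus)))) c1
        rw [UG_int _ c2, UG_int _ c1]
        rfl
      simp only [this]
      have c3 : Continuous fun ω : ℤ → Torus => MA t r (ω (2*k) + (α:Torus)) :=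
        (MA_cont t r).comp (by fun_prop)
      rw [iid_fubini hP (2*k) (UG_cont (PhiG_cont t r α k) (UG_cont c3 continuous_const))]
      congr 1
      funext ω
      simp only [PhiG_update t r α ω (2*k) _ k le_rfl, Function.update_self]
      rw [UG_int _ (UG_cont hA continuous_const)]
      rfl
    rw [e1]
    refine (ih _).trans ?_
    rw [pow_succ, mul_assoc]
    exact mul_le_mul_of_nonneg_left (hgap y) (by positivity)


abbrev M2 : Type := Matrix (Fin 2) (Fin 2) ℂ

lemma GD_norm_ge (g : GD) : 1 ≤ 2 * ‖(g : M2)‖ ^ 2 := by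
  have h : ‖(g : M2).det‖ = 1 := g.2
  rw [Matrix.det_fin_two] at h
  have e : ∀ i j, ‖(g : M2) i j‖ ≤ ‖(g : M2)‖ := fun i j => Matrix.norm_entry_le_entrywise_sup_norm _
  have h2 := norm_sub_le ((g : M2) 0 0 * (g : M2) 1 1) ((g : M2) 0 1 * (g : M2) 1 0)
  rw [h, norm_mul, norm_mul] at h2
  have a := mul_le_mul (e 0 0) (e 1 1) (norm_nonneg _) (norm_nonneg _)
  have b := mul_le_mul (e 0 1) (e 1 0) (norm_nonneg _) (norm_nonneg _)
  nlinarith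

lemma GD_norm_ge' (g : GD) : 1 ≤ 2 * ‖(g : M2)‖ := by
  have := GD_norm_ge g
  have h0 := norm_nonneg (g : M2)
  nlinarith

lemma M2_mul_norm (A B : M2) : ‖A * B‖ ≤ 2 * ‖A‖ * ‖B‖ := by
  have eA : ∀ i j, ‖A i j‖ ≤ ‖A‖ := fun i j => Matrix.norm_entry_le_entrywise_sup_norm _
  have eB : ∀ i j, ‖B i j‖ ≤ ‖B‖ := fun i j => Matrix.norm_entry_le_entrywise_sup_norm _
  rw [Matrix.norm_le_iff (by positivity)]
  intro i j
  rw [Matrix.mul_apply, Fin.sum_univ_two]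
  refine (norm_add_le _ _).trans ?_
  rw [norm_mul, norm_mul]
  have a := mul_le_mul (eA i 0) (eB 0 j) (norm_nonneg _) (norm_nonneg _)
  have b := mul_le_mul (eA i 1) (eB 1 j) (norm_nonneg _) (norm_nonneg _)
  linarith

lemma M2_mulVec_norm (A : M2) (v : V2) : ‖A.mulVec v‖ ≤ 2 * ‖A‖ * ‖v‖ := by
  have eA : ∀ i j, ‖A i j‖ ≤ ‖A‖ := fun i j => Matrix.norm_entry_le_entrywise_sup_norm _
  have eB : ∀ i, ‖v i‖ ≤ ‖v‖ := fun i => norm_le_pi_norm v i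
  rw [pi_norm_le_iff_of_nonneg (by positivity)]
  intro i
  rw [Matrix.mulVec, dotProduct, Fin.sum_univ_two]
  refine (norm_add_le _ _).trans ?_
  rw [norm_mul, norm_mul]
  have a := mul_le_mul (eA i 0) (eB 0) (norm_nonneg _) (norm_nonneg _)
  have b := mul_le_mul (eA i 1) (eB 1) (norm_nonneg _) (norm_nonneg _)
  linarith

lemma test_vec : ∃ y : H2, 0 < ‖y‖ ∧ ∀ g : GD,
    ((2 * ‖(g : M2)‖) ^ 4)⁻¹ * ‖y‖ ^ 2 ≤ ⟪y, UG g y⟫_ℝ := by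
  have hB : MeasurableSet (Metric.ball (0 : V2) 1) := measurableSet_ball
  have hfin : (volume : Measure V2) (Metric.ball (0 : V2) 1) ≠ ∞ := measure_ball_lt_top.ne
  have hy2 : ‖(indicatorConstLp 2 hB hfin (1 : ℝ) : H2)‖ ^ 2 =
      (volume : Measure V2).real (Metric.ball (0 : V2) 1) := by
    rw [← real_inner_self_eq_norm_sq, L2.real_inner_indicatorConstLp_one_indicatorConstLp_one,
      Set.inter_self]
  have hpos : 0 < (volume : Measure V2).real (Metric.ball (0 : V2) 1) :=
    ENNReal.toReal_pos (Metric.measure_ball_pos _ _ one_pos).ne' hfin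
  refine ⟨indicatorConstLp 2 hB hfin (1 : ℝ), ?_, ?_⟩
  · by_contra h
    have : ‖(indicatorConstLp 2 hB hfin (1 : ℝ) : H2)‖ = 0 := le_antisymm (not_lt.mp h) (norm_nonneg _)
    rw [this] at hy2
    norm_num at hy2
    linarith
  · intro g
    have e : UG g (indicatorConstLp 2 hB hfin (1 : ℝ)) =
        indicatorConstLp 2 (hB.preimage (GD_mp g).measurable)
          (by rwa [(GD_mp g).measure_preimage hB.nullMeasurableSet]) (1 : ℝ) := rfl
    rw [e, hy2, L2.real_inner_indicatorConstLp_one_indicatorConstLp_one (hμs := hfin)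
      (hμt := by rwa [(GD_mp g).measure_preimage hB.nullMeasurableSet])]
    have h1 := GD_norm_ge' g
    have hsub : Metric.ball (0 : V2) (2 * ‖(g : M2)‖)⁻¹ ⊆ Metric.ball (0 : V2) 1 ∩
        (fun v : V2 => (g : M2).mulVec v) ⁻¹' Metric.ball (0 : V2) 1 := by
      intro v hv
      rw [mem_ball_zero_iff] at hv
      refine ⟨?_, ?_⟩
      · rw [mem_ball_zero_iff]
        exact hv.trans_le (inv_le_one_of_one_le₀ h1)
      · rw [Set.mem_preimage, mem_ball_zero_iff]
        refine (M2_mulVec_norm _ _).trans_lt ?_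
        have := mul_lt_mul_of_pos_left hv (show 0 < 2 * ‖(g : M2)‖ by linarith)
        rwa [mul_inv_cancel₀ (by linarith)] at this
    have hm := measureReal_mono (μ := (volume : Measure V2)) hsub
      (measure_lt_top_of_subset Set.inter_subset_left hfin).ne
    refine le_trans (le_of_eq ?_) hm
    have hfr : Module.finrank ℝ V2 = 4 := by
      rw [Module.finrank_pi_fintype]
      simp [Complex.finrank_real_complex]
    rw [measureReal_def, measureReal_def, Measure.addHaar_ball _ _ (show 0 ≤ (2 * ‖(g : M2)‖)⁻¹ by positivity), hfr,
      ENNReal.toReal_mul, ENNReal.toReal_ofReal (by positivity), inv_pow]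

lemma PhiG_norm_cont (t r α : ℝ) (k : ℕ) : Continuous fun ω => ‖(PhiG t r α ω k : M2)‖ :=
  continuous_norm.comp (continuous_subtype_val.comp (PhiG_cont t r α k))

lemma PhiG_log_cont (t r α : ℝ) (k : ℕ) :
    Continuous fun ω => Real.log (2 * ‖(PhiG t r α ω k : M2)‖) :=
  Continuous.log (continuous_const.mul (PhiG_norm_cont t r α k)) fun ω => by
    have := GD_norm_ge' (PhiG t r α ω k)
    linarith

lemma u_lower {ν : Measure Torus} [IsProbabilityMeasure ν] {P : Measure (ℤ → Torus)}
    [IsProbabilityMeasure P] (hP : IsIid ν P) (t r α q : ℝ) (hq : 0 < q)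
    (hgap : ∀ F, ‖PA ν (fun θ => MA t r (θ+(α : Torus))) (PA ν (fun θ => MB t r (θ+(α : Torus))) F)‖ ≤ q*‖F‖)
    (k : ℕ) : k * (- Real.log q / 4) ≤ ∫ ω, Real.log (2 * ‖(PhiG t r α ω k : M2)‖) ∂P := by
  obtain ⟨y, hy, hyg⟩ := test_vec
  set X : (ℤ → Torus) → ℝ := fun ω => ((2 * ‖(PhiG t r α ω k : M2)‖) ^ 4)⁻¹ with hX
  have hge : ∀ ω, 1 ≤ 2 * ‖(PhiG t r α ω k : M2)‖ := fun ω => GD_norm_ge' _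
  have hXc : Continuous X := by
    refine Continuous.inv₀ ((continuous_const.mul (PhiG_norm_cont t r α k)).pow 4) fun ω => ?_
    have := hge ω
    positivity
  have hXi : Integrable X P := cont_int P hXc
  have hUc := UG_cont (PhiG_cont t r α k) (continuous_const (y := y))
  have h1 : (∫ ω, X ω ∂P) * ‖y‖ ^ 2 ≤ q ^ k * ‖y‖ ^ 2 := by
    calc (∫ ω, X ω ∂P) * ‖y‖ ^ 2 = ∫ ω, X ω * ‖y‖ ^ 2 ∂P := (integral_mul_const _ _).symm
      _ ≤ ∫ ω, ⟪y, UG (PhiG t r α ω k) y⟫_ℝ ∂P :=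
          integral_mono (hXi.mul_const _) (cont_int P (continuous_const.inner hUc)) fun ω => hyg _
      _ = ⟪y, ∫ ω, UG (PhiG t r α ω k) y ∂P⟫_ℝ := integral_inner (cont_int P hUc) y
      _ ≤ ‖y‖ * ‖∫ ω, UG (PhiG t r α ω k) y ∂P‖ := real_inner_le_norm _ _
      _ ≤ ‖y‖ * (q ^ k * ‖y‖) :=
          mul_le_mul_of_nonneg_left (E_UG hP t r α q hq.le hgap k y) (norm_nonneg _)
      _ = q ^ k * ‖y‖ ^ 2 := by ring
  have h2 : ∫ ω, X ω ∂P ≤ q ^ k := le_of_mul_le_mul_right h1 (by positivity)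
  have hqk : 0 < q ^ k := by positivity
  have h3 : ∀ ω, -4 * Real.log (2 * ‖(PhiG t r α ω k : M2)‖) ≤ (q ^ k)⁻¹ * X ω - 1 + k * Real.log q := by
    intro ω
    have hp : 0 < 2 * ‖(PhiG t r α ω k : M2)‖ := by linarith [hge ω]
    have hXp : 0 < X ω := by simp only [hX]; positivity
    have := Real.log_le_sub_one_of_pos (show 0 < (q ^ k)⁻¹ * X ω by positivity)
    rw [Real.log_mul (by positivity) hXp.ne', Real.log_inv, Real.log_pow] at this
    simp only [hX] at this ⊢
    rw [Real.log_inv, Real.log_pow] at this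
    push_cast at this
    linarith
  have hLi := cont_int P (PhiG_log_cont t r α k)
  have h4 : ∫ ω, -4 * Real.log (2 * ‖(PhiG t r α ω k : M2)‖) ∂P ≤
      ∫ ω, ((q ^ k)⁻¹ * X ω - 1 + k * Real.log q) ∂P := integral_mono (hLi.const_mul (-4))
    (((hXi.const_mul (q ^ k)⁻¹).sub (integrable_const 1)).add (integrable_const (k * Real.log q))) h3
  rw [integral_const_mul] at h4
  have h5 : ∫ ω, ((q ^ k)⁻¹ * X ω - 1 + k * Real.log q) ∂P
      = (q ^ k)⁻¹ * (∫ ω, X ω ∂P) - 1 + k * Real.log q := by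
    have hs : Integrable (fun ω => (q ^ k)⁻¹ * X ω - 1) P :=
      (hXi.const_mul (q ^ k)⁻¹).sub (integrable_const 1)
    rw [integral_add hs (integrable_const _),
      integral_sub (hXi.const_mul (q ^ k)⁻¹) (integrable_const 1), integral_const_mul]
    simp
  rw [h5] at h4
  have h6 : (q ^ k)⁻¹ * (∫ ω, X ω ∂P) ≤ 1 := by
    have := mul_le_mul_of_nonneg_left h2 (inv_nonneg.mpr hqk.le)
    rwa [inv_mul_cancel₀ hqk.ne'] at this
  linarith

lemma u_subadd {ν : Measure Torus} [IsProbabilityMeasure ν] {P : Measure (ℤ → Torus)}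
    [IsProbabilityMeasure P] (hP : IsIid ν P) (t r α : ℝ) :
    Subadditive fun k => ∫ ω, Real.log (2 * ‖(PhiG t r α ω k : M2)‖) ∂P := by
  intro m n
  have hs : Continuous (fun (ω : ℤ → Torus) (i : ℤ) => ω (i + 2 * m)) := by fun_prop
  have e : ∫ ω, Real.log (2 * ‖(PhiG t r α ω n : M2)‖) ∂P =
      ∫ ω, Real.log (2 * ‖(PhiG t r α (fun i => ω (i + 2 * m)) n : M2)‖) ∂P := by
    conv_lhs => rw [← iid_shift hP (2 * m)]
    exact integral_map hs.measurable.aemeasurable (PhiG_log_cont t r α n).aestronglyMeasurable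
  have hi : Integrable (fun ω => Real.log (2 * ‖(PhiG t r α (fun i => ω (i + 2 * m)) n : M2)‖)) P :=
    cont_int P ((PhiG_log_cont t r α n).comp hs)
  have hj := cont_int P (PhiG_log_cont t r α m)
  simp only
  rw [e, add_comm (integral P _), ← integral_add hi hj]
  refine integral_mono (cont_int P (PhiG_log_cont t r α _)) (hi.add hj) fun ω => ?_
  have h1 := GD_norm_ge' (PhiG t r α (fun i => ω (i + 2 * m)) n)
  have h2 := GD_norm_ge' (PhiG t r α ω m)
  have h3 := GD_norm_ge' (PhiG t r α ω (m + n))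
  simp only [Pi.add_apply]
  rw [← Real.log_mul (by linarith) (by linarith)]
  refine Real.log_le_log (by linarith) ?_
  rw [PhiG_add, Submonoid.coe_mul]
  have := M2_mul_norm (PhiG t r α (fun i => ω (i + 2 * m)) n : M2) (PhiG t r α ω m : M2)
  linarith


/-- If `supp ν` has nonempty interior, then for every `α ∈ ℝ` the
Lyapunov exponent `γ(e^{iα}) = lim (1/k) 𝔼[log ‖Φ(k,·)‖]` exists and is strictly positive. -/
theorem lyapunov_positive
    (t r : ℝ) (ht0 : 0 < t) (ht1 : t < 1) (hr0 : 0 < r) (hr1 : r < 1)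
    (hrt : r^2 + t^2 = 1)
    (ν : Measure Torus) [IsProbabilityMeasure ν]
    (hsupp : (interior (measSupport ν)).Nonempty)
    (ℙ : Measure (ℤ → Torus)) [IsProbabilityMeasure ℙ]
    (hiid : ∀ (s : Finset ℤ) (A : ℤ → Set Torus), (∀ k, MeasurableSet (A k)) →
      ℙ {ω | ∀ k ∈ s, ω k ∈ A k} = ∏ k ∈ s, ν (A k)) :
    ∀ α : ℝ, ∃ γ : ℝ, 0 < γ ∧
      Tendsto (fun k : ℕ => (1/(k:ℝ)) * ∫ ω, Real.log ‖Phi t r α ω k‖ ∂ℙ)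
        atTop (nhds γ) := by
  intro α
  have hP : IsIid ν ℙ := hiid
  obtain ⟨κ, hκ, h1, h2, h3, h4⟩ := nondeg_all hsupp (α : Torus)
  obtain ⟨q, hq0, hq1, hgap⟩ := gap t r ht0 hr0 hrt ν (α : Torus) κ hκ h1 h2 h3 h4
  have hlow := u_lower hP t r α q hq0 hgap
  have hsub := u_subadd hP t r α
  have hlog : 0 < - Real.log q / 4 := by
    have := Real.log_neg hq0 hq1
    linarith
  have hbdd : BddBelow (Set.range fun n : ℕ =>
      (∫ ω, Real.log (2 * ‖(PhiG t r α ω n : M2)‖) ∂ℙ) / n) := by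
    refine ⟨0, ?_⟩
    rintro _ ⟨n, rfl⟩
    exact div_nonneg (le_trans (by positivity) (hlow n)) (by positivity)
  have hlim := hsub.tendsto_lim hbdd
  refine ⟨hsub.lim, lt_of_lt_of_le hlog ?_, ?_⟩
  · refine ge_of_tendsto hlim ?_
    filter_upwards [eventually_gt_atTop 0] with n hn
    have hn' : (0:ℝ) < n := by exact_mod_cast hn
    rw [le_div_iff₀ hn', mul_comm]
    exact hlow n
  · have h0 : Tendsto (fun n : ℕ => Real.log 2 / (n : ℝ)) atTop (nhds 0) :=
      tendsto_const_div_atTop_nhds_zero_nat _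
    have := hlim.sub h0
    rw [sub_zero] at this
    refine this.congr fun n => ?_
    have hi : Integrable (fun ω => Real.log (2 * ‖(PhiG t r α ω n : M2)‖)) ℙ :=
      cont_int ℙ (PhiG_log_cont t r α n)
    have e : ∀ ω, Real.log ‖Phi t r α ω n‖ = Real.log (2 * ‖(PhiG t r α ω n : M2)‖) - Real.log 2 := by
      intro ω
      have := GD_norm_ge' (PhiG t r α ω n)
      rw [Phi_eq t r α ht0 hrt, Real.log_mul (by norm_num) (by linarith)]
      ring
    simp only [e]
    rw [integral_sub hi (integrable_const _)]
    simp
    ring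

end
end

section
/- Fix real numbers t, r with 0 < t < 1, 0 < r < 1 and r² + t² = 1. For every sequence of phases θ = (θ_k)_{k∈ℤ}, the pair of vectors e_{−1}, e_0 is cyclic for U_θ: the closed linear span of { U_θ^n e_{−1} : n ∈ ℤ } ∪ { U_θ^n e_0 : n ∈ ℤ } equals all of ℓ²(ℤ;ℂ). -/
open MeasureTheory Complex Filter

noncomputable section

/-- `ℓ²(ℤ;ℂ)`. -/
abbrev Hz : Type := lp (fun _ : ℤ => ℂ) 2

/-- Canonical orthonormal basis of `ℓ²(ℤ;ℂ)`. -/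
def ez (k : ℤ) : Hz := lp.single 2 k (1 : ℂ)

/-- Matrix entries of the operator `S(t)`: `Sent t r k j = ⟨e_k, S e_j⟩`. -/
def Sent (t r : ℝ) (k j : ℤ) : ℂ :=
  if k % 2 = 0 then
    (if j = k - 1 then (r*t : ℝ) else if j = k then (r^2 : ℝ)
     else if j = k + 1 then (r*t : ℝ) else if j = k + 2 then (-t^2 : ℝ) else 0)
  else
    (if j = k - 2 then (-t^2 : ℝ) else if j = k - 1 then (-(r*t) : ℝ)
     else if j = k then (r^2 : ℝ) else if j = k + 1 then (-(r*t) : ℝ) else 0)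

lemma ez_apply (k j : ℤ) : (ez k : ∀ _ : ℤ, ℂ) j = if j = k then 1 else 0 := by
  unfold ez
  rw [lp.single_apply, Pi.single_apply]

lemma inner_ez (k : ℤ) (x : Hz) : inner (𝕜 := ℂ) (ez k) x = x k := by
  unfold ez
  rw [lp.inner_single_left]
  simp

lemma ez_smul (k : ℤ) (c : ℂ) : lp.single 2 k c = c • ez k := by
  unfold ez
  rw [← lp.single_smul]
  simp

lemma col_even (t r : ℝ) (d : ℤ → ℂ) (U : Hz →L[ℂ] Hz)
    (hU : ∀ k j : ℤ, (U (ez j)) k = d k * Sent t r k j) (m : ℤ) :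
    U (ez (2*m)) = (-(t:ℂ)^2 * d (2*m-2)) • ez (2*m-2) + (-(r*t:ℂ) * d (2*m-1)) • ez (2*m-1)
      + ((r:ℂ)^2 * d (2*m)) • ez (2*m) + (-(r*t:ℂ) * d (2*m+1)) • ez (2*m+1) := by
  apply lp.ext
  funext k
  rw [hU]
  simp only [lp.coeFn_add, lp.coeFn_smul, Pi.add_apply, Pi.smul_apply, ez_apply, smul_eq_mul, Sent]
  by_cases h1 : k = 2*m-2
  · subst h1
    split_ifs <;> first | omega | (push_cast; ring)
  by_cases h2 : k = 2*m-1
  · subst h2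
    split_ifs <;> first | omega | (push_cast; ring)
  by_cases h3 : k = 2*m
  · subst h3
    split_ifs <;> first | omega | (push_cast; ring)
  by_cases h4 : k = 2*m+1
  · subst h4
    split_ifs <;> first | omega | (push_cast; ring)
  split_ifs <;> first | omega | simp

lemma col_odd (t r : ℝ) (d : ℤ → ℂ) (U : Hz →L[ℂ] Hz)
    (hU : ∀ k j : ℤ, (U (ez j)) k = d k * Sent t r k j) (m : ℤ) :
    U (ez (2*m+1)) = ((r*t:ℂ) * d (2*m)) • ez (2*m) + ((r:ℂ)^2 * d (2*m+1)) • ez (2*m+1)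
      + ((r*t:ℂ) * d (2*m+2)) • ez (2*m+2) + (-(t:ℂ)^2 * d (2*m+3)) • ez (2*m+3) := by
  apply lp.ext
  funext k
  rw [hU]
  simp only [lp.coeFn_add, lp.coeFn_smul, Pi.add_apply, Pi.smul_apply, ez_apply, smul_eq_mul, Sent]
  by_cases h1 : k = 2*m
  · subst h1
    split_ifs <;> first | omega | (push_cast; ring)
  by_cases h2 : k = 2*m+1
  · subst h2
    split_ifs <;> first | omega | (push_cast; ring)
  by_cases h3 : k = 2*m+2
  · subst h3
    split_ifs <;> first | omega | (push_cast; ring)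
  by_cases h4 : k = 2*m+3
  · subst h4
    split_ifs <;> first | omega | (push_cast; ring)
  split_ifs <;> first | omega | simp

lemma mem_of_smul (V : Submodule ℂ Hz) (c : ℂ) (hc : c ≠ 0) (x : Hz) (h : c • x ∈ V) : x ∈ V :=
  (V.smul_mem_iff hc).1 h

lemma step (t r : ℝ) (ht0 : t ≠ 0) (hrt : r^2 + t^2 = 1) (d : ℤ → ℂ) (hd : ∀ k, d k ≠ 0)
    (U : Hz →L[ℂ] Hz)
    (hU : ∀ k j : ℤ, (U (ez j)) k = d k * Sent t r k j)
    (V : Submodule ℂ Hz) (h1 : ∀ x ∈ V, U x ∈ V) (h2 : ∀ x, U x ∈ V → x ∈ V) (m : ℤ)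
    (ha : ez (2*m-1) ∈ V) (hb : ez (2*m) ∈ V) :
    (ez (2*m-3) ∈ V ∧ ez (2*m-2) ∈ V) ∧ (ez (2*m+1) ∈ V ∧ ez (2*m+2) ∈ V) := by
  have hrt' : (r:ℂ)^2 + (t:ℂ)^2 = 1 := by exact_mod_cast hrt
  have ht : (t:ℂ) ≠ 0 := by exact_mod_cast ht0
  have e0 := col_even t r d U hU m
  have e1 := col_odd t r d U hU (m-1)
  have e2 := col_odd t r d U hU m
  have e3 := col_even t r d U hU (m+1)
  have e4 := col_odd t r d U hU (m-2)
  have e5 := col_even t r d U hU (m-1)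
  rw [show 2*(m-1)+1 = 2*m-1 by ring, show 2*(m-1) = 2*m-2 by ring,
    show 2*m-2+2 = 2*m by ring, show 2*m-2+3 = 2*m+1 by ring] at e1
  rw [show 2*(m+1)-2 = 2*m by ring, show 2*(m+1)-1 = 2*m+1 by ring,
    show 2*(m+1) = 2*m+2 by ring, show 2*m+2+1 = 2*m+3 by ring] at e3
  rw [show 2*(m-2)+1 = 2*m-3 by ring, show 2*(m-2) = 2*m-4 by ring,
    show 2*m-4+2 = 2*m-2 by ring, show 2*m-4+3 = 2*m-1 by ring] at e4
  rw [show 2*(m-1)-2 = 2*m-4 by ring, show 2*(m-1)-1 = 2*m-3 by ring,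
    show 2*(m-1) = 2*m-2 by ring, show 2*m-2+1 = 2*m-1 by ring] at e5
  have f0 := h1 _ hb
  have f1 := h1 _ ha
  have g1 : ez (2*m-2) ∈ V := by
    apply mem_of_smul V (t * d (2*m-2)) (mul_ne_zero ht (hd _))
    have : ((t:ℂ) * d (2*m-2)) • ez (2*m-2) = (r:ℂ) • U (ez (2*m-1)) - (t:ℂ) • U (ez (2*m))
        - (r * d (2*m-1)) • ez (2*m-1) := by
      rw [e0, e1]
      match_scalars
      · linear_combination (-(t:ℂ) * d (2*m-2)) * hrt'
      · linear_combination (-(r:ℂ) * d (2*m-1)) * hrt'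
      · ring
      · ring
    rw [this]
    exact V.sub_mem (V.sub_mem (V.smul_mem _ f1) (V.smul_mem _ f0)) (V.smul_mem _ ha)
  have g2 : ez (2*m+1) ∈ V := by
    apply mem_of_smul V (t * d (2*m+1)) (mul_ne_zero ht (hd _))
    have : ((t:ℂ) * d (2*m+1)) • ez (2*m+1) = (r * d (2*m)) • ez (2*m)
        - (t:ℂ) • U (ez (2*m-1)) - (r:ℂ) • U (ez (2*m)) := by
      rw [e0, e1]
      match_scalars
      · linear_combination (-(t:ℂ) * d (2*m+1)) * hrt'
      · linear_combination ((r:ℂ) * d (2*m)) * hrt'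
      · ring
      · ring
    rw [this]
    exact V.sub_mem (V.sub_mem (V.smul_mem _ hb) (V.smul_mem _ f1)) (V.smul_mem _ f0)
  have g3 : ez (2*m+2) ∈ V := by
    apply mem_of_smul V (t^2) (pow_ne_zero 2 ht)
    have : U ((r*t:ℂ) • ez (2*m-1) + ((r:ℂ)^2) • ez (2*m) + (r*t:ℂ) • ez (2*m+1)
        - ((t:ℂ)^2) • ez (2*m+2)) = d (2*m) • ez (2*m) := by
      simp only [map_add, map_sub, map_smul, e0, e1, e2, e3]
      match_scalars
      · ring
      · ring
      · linear_combination (d (2*m) * (r^2+t^2+1)) * hrt'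
      · ring
      · ring
      · ring
    have h := h2 _ (this ▸ V.smul_mem _ hb)
    have k := V.sub_mem (V.add_mem (V.add_mem (V.smul_mem (r*t:ℂ) ha) (V.smul_mem ((r:ℂ)^2) hb))
      (V.smul_mem (r*t:ℂ) g2)) h
    simpa using k
  have g4 : ez (2*m-3) ∈ V := by
    apply mem_of_smul V (t^2) (pow_ne_zero 2 ht)
    have : U (- (r*t:ℂ) • ez (2*m-2) + ((r:ℂ)^2) • ez (2*m-1) - (r*t:ℂ) • ez (2*m)
        - ((t:ℂ)^2) • ez (2*m-3)) = d (2*m-1) • ez (2*m-1) := by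
      simp only [map_add, map_sub, map_smul, e0, e1, e4, e5]
      match_scalars
      · ring
      · ring
      · ring
      · linear_combination (d (2*m-1) * (r^2+t^2+1)) * hrt'
      · ring
      · ring
    have h := h2 _ (this ▸ V.smul_mem _ ha)
    have k := V.sub_mem (V.sub_mem (V.add_mem (V.smul_mem (-(r*t:ℂ)) g1)
      (V.smul_mem ((r:ℂ)^2) ha)) (V.smul_mem (r*t:ℂ) hb)) h
    simpa using k
  exact ⟨⟨g4, g1⟩, g2, g3⟩

/-- The pair `e_{-1}, e_0` is cyclic for `U_θ = D_θ S`: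
the closed span of `{U_θ^n e_{-1} : n ∈ ℤ} ∪ {U_θ^n e_0 : n ∈ ℤ}` is all of `ℓ²(ℤ;ℂ)`. -/
theorem cyclic_pair_Z
    (t r : ℝ) (ht0 : 0 < t) (ht1 : t < 1) (hr0 : 0 < r) (hr1 : r < 1)
    (hrt : r^2 + t^2 = 1)
    (θ : ℤ → ℝ)
    (Uu : (Hz →L[ℂ] Hz)ˣ)
    (hU : ∀ k j : ℤ, inner (𝕜 := ℂ) (ez k) ((Uu : Hz →L[ℂ] Hz) (ez j)) =
      Complex.exp (-(θ k : ℂ) * Complex.I) * Sent t r k j) :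
    (Submodule.span ℂ
      ({x : Hz | ∃ n : ℤ, x = ((Uu ^ n : (Hz →L[ℂ] Hz)ˣ) : Hz →L[ℂ] Hz) (ez (-1))} ∪
       {x : Hz | ∃ n : ℤ, x = ((Uu ^ n : (Hz →L[ℂ] Hz)ˣ) : Hz →L[ℂ] Hz) (ez 0)})
      ).topologicalClosure = ⊤ := by
  have hU' : ∀ k j : ℤ, ((Uu : Hz →L[ℂ] Hz) (ez j)) k
      = Complex.exp (-(θ k : ℂ) * Complex.I) * Sent t r k j := fun k j => by
    rw [← hU, inner_ez]
  set W : Set Hz :=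
      ({x : Hz | ∃ n : ℤ, x = ((Uu ^ n : (Hz →L[ℂ] Hz)ˣ) : Hz →L[ℂ] Hz) (ez (-1))} ∪
       {x : Hz | ∃ n : ℤ, x = ((Uu ^ n : (Hz →L[ℂ] Hz)ˣ) : Hz →L[ℂ] Hz) (ez 0)}) with hW
  set V := Submodule.span ℂ W with hV
  have key : ∀ p : ℤ, ∀ x ∈ V, ((Uu ^ p : (Hz →L[ℂ] Hz)ˣ) : Hz →L[ℂ] Hz) x ∈ V := by
    intro p x hx
    have hle : V ≤ V.comap (((Uu ^ p : (Hz →L[ℂ] Hz)ˣ) : Hz →L[ℂ] Hz) : Hz →ₗ[ℂ] Hz) := by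
      rw [hV, Submodule.span_le]
      rintro y (⟨n, rfl⟩ | ⟨n, rfl⟩)
      · refine Submodule.subset_span (Or.inl ⟨p + n, ?_⟩)
        rw [zpow_add]; rfl
      · refine Submodule.subset_span (Or.inr ⟨p + n, ?_⟩)
        rw [zpow_add]; rfl
    exact hle hx
  have h1 : ∀ x ∈ V, (Uu : Hz →L[ℂ] Hz) x ∈ V := fun x hx => by simpa using key 1 x hx
  have h2 : ∀ x, (Uu : Hz →L[ℂ] Hz) x ∈ V → x ∈ V := fun x hx => by
    have h := key (-1) _ hx
    have e : ((Uu ^ (-1 : ℤ) : (Hz →L[ℂ] Hz)ˣ) : Hz →L[ℂ] Hz) ((Uu : Hz →L[ℂ] Hz) x) = x := by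
      rw [← ContinuousLinearMap.mul_apply, ← Units.val_mul]
      simp
    rwa [e] at h
  have st := step t r ht0.ne' hrt (fun k => Complex.exp (-(θ k : ℂ) * Complex.I))
    (fun k => Complex.exp_ne_zero _) Uu hU' V h1 h2
  have all : ∀ m : ℤ, ez (2*m-1) ∈ V ∧ ez (2*m) ∈ V := by
    intro m
    induction m using Int.induction_on with
    | zero =>
      exact ⟨Submodule.subset_span (Or.inl ⟨0, by simp⟩), Submodule.subset_span (Or.inr ⟨0, by simp⟩)⟩
    | succ i ih =>
      have h := (st _ ih.1 ih.2).2
      rwa [show (2 * (i:ℤ) + 1) = 2 * ((i:ℤ)+1) - 1 by ring,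
        show (2 * (i:ℤ) + 2) = 2 * ((i:ℤ)+1) by ring] at h
    | pred i ih =>
      have h := (st _ ih.1 ih.2).1
      rwa [show (2 * (-(i:ℤ)) - 3) = 2 * (-(i:ℤ)-1) - 1 by ring,
        show (2 * (-(i:ℤ)) - 2) = 2 * (-(i:ℤ)-1) by ring] at h
  have all' : ∀ k : ℤ, ez k ∈ V := by
    intro k
    rcases Int.even_or_odd' k with ⟨m, rfl | rfl⟩
    · exact (all m).2
    · have := (all (m+1)).1
      rwa [show 2*(m+1)-1 = 2*m+1 by ring] at this
  rw [eq_top_iff]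
  intro x _
  have hs := lp.hasSum_single (p := 2) (by norm_num) x
  refine mem_closure_of_tendsto hs (Filter.Eventually.of_forall fun s => ?_)
  refine V.sum_mem fun i _ => ?_
  rw [ez_smul]
  exact V.smul_mem _ (all' i)

end
end

section
/- Fix real numbers t, r with 0 < t < 1, 0 < r < 1 and r² + t² = 1. For every sequence of phases θ = (θ_k)_{k∈ℕ₀}, the vector e₀ is cyclic for U⁺_θ: the closed linear span of { (U⁺_θ)^n e_0 : n ∈ ℤ } equals all of ℓ²(ℕ₀;ℂ). -/
open MeasureTheory Complex Filter

noncomputable section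

/-- `ℓ²(ℕ₀;ℂ)`. -/
abbrev Hn : Type := lp (fun _ : ℕ => ℂ) 2

/-- Canonical orthonormal basis of `ℓ²(ℕ₀;ℂ)`. -/
def en (k : ℕ) : Hn := lp.single 2 k (1 : ℂ)

/-- Matrix entries of the half-lattice operator `S⁺`: `Spent t r k j = ⟨e_k, S⁺ e_j⟩`. -/
def Spent (t r : ℝ) (k j : ℕ) : ℂ :=
  if k = 0 then
    (if j = 0 then (-r : ℝ) else if j = 1 then (r*t : ℝ) else if j = 2 then (-t^2 : ℝ) else 0)
  else if k = 1 then
    (if j = 0 then (t : ℝ) else if j = 1 then (r^2 : ℝ) else if j = 2 then (-(r*t) : ℝ) else 0)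
  else if k % 2 = 0 then
    (if j + 1 = k then (r*t : ℝ) else if j = k then (r^2 : ℝ)
     else if j = k + 1 then (r*t : ℝ) else if j = k + 2 then (-t^2 : ℝ) else 0)
  else
    (if j + 2 = k then (-t^2 : ℝ) else if j + 1 = k then (-(r*t) : ℝ)
     else if j = k then (r^2 : ℝ) else if j = k + 1 then (-(r*t) : ℝ) else 0)

theorem aux_inner_en (k : ℕ) (x : Hn) : inner (𝕜 := ℂ) (en k) x = x k := by
  simp [en, lp.inner_single_left]

theorem aux_en_apply (k i : ℕ) : (en k : Hn) i = if i = k then (1 : ℂ) else 0 := by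
  simp [en, lp.single_apply, Pi.single_apply]

theorem aux_dense (W : Submodule ℂ Hn) (h : ∀ k, en k ∈ W) : W.topologicalClosure = ⊤ := by
  rw [Submodule.topologicalClosure_eq_top_iff, Submodule.eq_bot_iff]
  intro x hx
  ext k
  rw [← aux_inner_en]
  simpa using (Submodule.mem_orthogonal _ _).1 hx _ (h k)

set_option maxHeartbeats 4000000 in
/-- The vector `e₀` is cyclic for `U⁺_θ = D⁺_θ S⁺`:
the closed span of `{(U⁺_θ)^n e₀ : n ∈ ℤ}` is all of `ℓ²(ℕ₀;ℂ)`. -/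
theorem cyclic_vector_N
    (t r : ℝ) (ht0 : 0 < t) (ht1 : t < 1) (hr0 : 0 < r) (hr1 : r < 1)
    (hrt : r^2 + t^2 = 1)
    (θ : ℕ → ℝ)
    (Uu : (Hn →L[ℂ] Hn)ˣ)
    (hU : ∀ k j : ℕ, inner (𝕜 := ℂ) (en k) ((Uu : Hn →L[ℂ] Hn) (en j)) =
      Complex.exp (-(θ k : ℂ) * Complex.I) * Spent t r k j) :
    (Submodule.span ℂ
      {x : Hn | ∃ n : ℤ, x = ((Uu ^ n : (Hn →L[ℂ] Hn)ˣ) : Hn →L[ℂ] Hn) (en 0)}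
      ).topologicalClosure = ⊤ := by
  set d : ℕ → ℂ := fun k => Complex.exp (-(θ k : ℂ) * Complex.I) with hd
  have hd0 : ∀ k, d k ≠ 0 := fun k => Complex.exp_ne_zero _
  have hc : ∀ k j : ℕ, ((Uu : Hn →L[ℂ] Hn) (en j)) k = d k * Spent t r k j := by
    intro k j
    rw [← aux_inner_en, hU]
  have ht : (t : ℂ) ≠ 0 := by exact_mod_cast ht0.ne'
  have hrtC : (r : ℂ)^2 + (t : ℂ)^2 = 1 := by exact_mod_cast hrt
  clear hU
  clear_value d
  clear hd
  set W := Submodule.span ℂ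
      {x : Hn | ∃ n : ℤ, x = ((Uu ^ n : (Hn →L[ℂ] Hn)ˣ) : Hn →L[ℂ] Hn) (en 0)} with hW
  have key : ∀ m : ℤ, ∀ x ∈ W, ((Uu ^ m : (Hn →L[ℂ] Hn)ˣ) : Hn →L[ℂ] Hn) x ∈ W := by
    intro m x hx
    induction hx using Submodule.span_induction with
    | mem x hx =>
      obtain ⟨n, rfl⟩ := hx
      refine Submodule.subset_span ⟨m + n, ?_⟩
      rw [zpow_add, Units.val_mul]; rfl
    | zero => simp
    | add x y _ _ hx hy => rw [map_add]; exact W.add_mem hx hy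
    | smul a x _ hx => rw [map_smul]; exact W.smul_mem _ hx
  have hUW : ∀ x ∈ W, (Uu : Hn →L[ℂ] Hn) x ∈ W := by
    intro x hx
    simpa using key 1 x hx
  have hUW' : ∀ x, (Uu : Hn →L[ℂ] Hn) x ∈ W → x ∈ W := by
    intro x hx
    have h := key (-1) _ hx
    have h2 : ((Uu ^ (-1 : ℤ) : (Hn →L[ℂ] Hn)ˣ) : Hn →L[ℂ] Hn) ((Uu : Hn →L[ℂ] Hn) x) = x := by
      rw [zpow_neg_one, ← mul_apply_eq_comp, Units.inv_mul]; rfl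
    rwa [h2] at h
  have hdiv : ∀ (a : ℂ) (x y : Hn), a ≠ 0 → x ∈ W → x + a • y ∈ W → y ∈ W := by
    intro a x y ha hx hxy
    have h := (W.add_mem_iff_right hx).1 hxy
    exact (W.smul_mem_iff ha).1 h
  have C0 : (Uu : Hn →L[ℂ] Hn) (en 0) = (-(r : ℂ) * d 0) • en 0 + ((t : ℂ) * d 1) • en 1 := by
    ext i
    rw [hc]
    simp only [lp.coeFn_add, lp.coeFn_smul, Pi.add_apply, Pi.smul_apply, aux_en_apply, smul_eq_mul,
      Spent]
    split_ifs <;> first | (exfalso; omega) | (subst_vars; push_cast; ring)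
  have C1 : ∀ k, (Uu : Hn →L[ℂ] Hn) (en (2*k+1)) = (((r : ℂ) * t * d (2*k)) • en (2*k)
      + ((r : ℂ)^2 * d (2*k+1)) • en (2*k+1) + ((r : ℂ) * t * d (2*k+2)) • en (2*k+2))
      + (-(t : ℂ)^2 * d (2*k+3)) • en (2*k+3) := by
    intro k
    ext i
    rw [hc]
    simp only [lp.coeFn_add, lp.coeFn_smul, Pi.add_apply, Pi.smul_apply, aux_en_apply, smul_eq_mul,
      Spent]
    split_ifs <;> first | (exfalso; omega) | (subst_vars; push_cast; ring1) |
      (have hk : k = 0 := by omega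
       subst hk; subst_vars; push_cast; ring)
  have C2 : ∀ k, (Uu : Hn →L[ℂ] Hn) (en (2*k+2)) = (-(t : ℂ)^2 * d (2*k)) • en (2*k)
      + (-((r : ℂ) * t) * d (2*k+1)) • en (2*k+1) + ((r : ℂ)^2 * d (2*k+2)) • en (2*k+2)
      + (-((r : ℂ) * t) * d (2*k+3)) • en (2*k+3) := by
    intro k
    ext i
    rw [hc]
    simp only [lp.coeFn_add, lp.coeFn_smul, Pi.add_apply, Pi.smul_apply, aux_en_apply, smul_eq_mul,
      Spent]
    split_ifs <;> first | (exfalso; omega) | (subst_vars; push_cast; ring1) |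
      (have hk : k = 0 := by omega
       subst hk; subst_vars; push_cast; ring)
  have C3 : ∀ k, (Uu : Hn →L[ℂ] Hn) ((r : ℂ) • en (2*k+1) + (-(t : ℂ)) • en (2*k+2)) =
      ((t : ℂ) * d (2*k)) • en (2*k) + ((r : ℂ) * d (2*k+1)) • en (2*k+1) := by
    intro k
    rw [map_add, map_smul, map_smul, C1, C2]
    match_scalars
    · linear_combination (t : ℂ) * d (2*k) * hrtC
    · linear_combination (r : ℂ) * d (2*k+1) * hrtC
    · ring
    · ring
  have h0 : en 0 ∈ W := Submodule.subset_span ⟨0, by simp⟩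
  have main : ∀ k, en (2*k) ∈ W ∧ en (2*k+1) ∈ W := by
    intro k
    induction k with
    | zero =>
      refine ⟨h0, ?_⟩
      have h := hUW _ h0
      rw [C0] at h
      exact hdiv _ _ _ (mul_ne_zero ht (hd0 1)) (W.smul_mem _ h0) h
    | succ k ih =>
      obtain ⟨h1, h2⟩ := ih
      have h3 : en (2*k+2) ∈ W := by
        refine hdiv (-(t : ℂ)) _ _ (neg_ne_zero.2 ht) (W.smul_mem (r : ℂ) h2) (hUW' _ ?_)
        rw [C3]
        exact W.add_mem (W.smul_mem _ h1) (W.smul_mem _ h2)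
      refine ⟨h3, ?_⟩
      have h := hUW _ h2
      rw [C1] at h
      exact hdiv _ _ _ (mul_ne_zero (neg_ne_zero.2 (pow_ne_zero 2 ht)) (hd0 _))
        (W.add_mem (W.add_mem (W.smul_mem _ h1) (W.smul_mem _ h2)) (W.smul_mem _ h3)) h
  apply aux_dense
  intro k
  obtain ⟨m, rfl | rfl⟩ := Nat.even_or_odd' k
  · exact (main m).1
  · exact (main m).2

end
end

section
/- Fix real numbers t, r with 0 < t < 1, 0 < r < 1 and r² + t² = 1, and let I ⊆ ℝ be a nonempty open interval. If V is a linear subspace of ℝ⁴ such that τ(T(θ,η)) V ⊆ V for all θ, η ∈ I, then V = {0} or V = ℝ⁴. -/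
open Complex

noncomputable section

/-- The transfer matrix `T(θ,η) ∈ M₂(ℂ)`. -/
def Tmat (t r θ η : ℝ) : Matrix (Fin 2) (Fin 2) ℂ :=
  !![-Complex.exp (-(η:ℂ) * I),
     ((r/t : ℝ) : ℂ) * (Complex.exp (((θ - η : ℝ) : ℂ) * I) - Complex.exp (-(η:ℂ) * I));
     ((r/t : ℝ) : ℂ) * (1 - Complex.exp (-(η:ℂ) * I)),
     -((1/t^2 : ℝ) : ℂ) * Complex.exp ((θ:ℂ) * I) +
       ((r^2/t^2 : ℝ) : ℂ) * (Complex.exp (((θ - η : ℝ) : ℂ) * I) + 1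
         - Complex.exp (-(η:ℂ) * I))]

/-- The realification map `τ : M₂(ℂ) → M₄(ℝ)` replacing each entry `a` by the 2×2 real block
`Re(a)I + Im(a)J`, where `J = [[0,1],[-1,0]]`. -/
def tauM (M : Matrix (Fin 2) (Fin 2) ℂ) : Matrix (Fin 4) (Fin 4) ℝ :=
  fun i j =>
    let a : ℂ := M ⟨i.val / 2, by have := i.isLt; omega⟩ ⟨j.val / 2, by have := j.isLt; omega⟩
    if i.val % 2 = j.val % 2 then a.re
    else if i.val % 2 = 0 then a.im
    else -a.im

theorem trig_extract (a b : ℝ) (hab : a < b) (V : Submodule ℝ (Fin 4 → ℝ)) (p q s : Fin 4 → ℝ)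
    (h : ∀ x ∈ Set.Ioo a b, p + Real.cos x • q + Real.sin x • s ∈ V) :
    p ∈ V ∧ q ∈ V ∧ s ∈ V := by
  obtain ⟨d, hd0, hd1, hd2⟩ : ∃ d : ℝ, 0 < d ∧ d ≤ 1 ∧ d ≤ (b - a) / 8 :=
    ⟨min 1 ((b - a) / 8), lt_min one_pos (by linarith), min_le_left _ _, min_le_right _ _⟩
  have hsin : 0 < Real.sin d := Real.sin_pos_of_pos_of_lt_pi hd0 (by linarith [Real.pi_gt_three])
  have hcos : Real.cos d - 1 ≠ 0 := by
    intro hc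
    nlinarith [Real.sin_sq_add_cos_sq d]
  have hg : ∀ x, a < x - d → x + d < b → Real.cos x • q + Real.sin x • s ∈ V := by
    intro x h1 h2
    have e := V.smul_mem (2 * (Real.cos d - 1))⁻¹ (V.sub_mem (V.add_mem
      (h (x + d) ⟨by linarith, by linarith⟩) (h (x - d) ⟨by linarith, by linarith⟩))
      (V.smul_mem (2 : ℝ) (h x ⟨by linarith, by linarith⟩)))
    convert e using 1
    rw [eq_inv_smul_iff₀ (by simpa using hcos)]
    ext i
    simp [Real.cos_add, Real.sin_add, Real.cos_sub, Real.sin_sub]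
    ring
  set x := (a + b) / 2 with hx
  have g1 := hg x (by linarith) (by linarith)
  have g2 := hg (x + d) (by linarith) (by linarith)
  have g3 : Real.cos x • s - Real.sin x • q ∈ V := by
    have e := V.smul_mem (Real.sin d)⁻¹ (V.sub_mem g2 (V.smul_mem (Real.cos d) g1))
    convert e using 1
    rw [eq_inv_smul_iff₀ hsin.ne']
    ext i
    simp [Real.cos_add, Real.sin_add]
    ring
  refine ⟨?_, ?_, ?_⟩
  · have e := V.sub_mem (h x ⟨by linarith, by linarith⟩) g1
    convert e using 1
    ext i
    simp
  · have e := V.sub_mem (V.smul_mem (Real.cos x) g1) (V.smul_mem (Real.sin x) g3)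
    convert e using 1
    ext i
    simp
    linear_combination (-q i) * Real.sin_sq_add_cos_sq x
  · have e := V.add_mem (V.smul_mem (Real.sin x) g1) (V.smul_mem (Real.cos x) g3)
    convert e using 1
    ext i
    simp
    linear_combination (-s i) * Real.sin_sq_add_cos_sq x

theorem tauM_add (M N : Matrix (Fin 2) (Fin 2) ℂ) : tauM (M + N) = tauM M + tauM N := by
  ext i j
  simp only [tauM, Matrix.add_apply, Complex.add_re, Complex.add_im]
  split_ifs <;> ring

theorem tauM_smul (c : ℝ) (M : Matrix (Fin 2) (Fin 2) ℂ) : tauM (c • M) = c • tauM M := by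
  ext i j
  simp only [tauM, Matrix.smul_apply, Complex.smul_re, Complex.smul_im, smul_eq_mul]
  split_ifs <;> ring

theorem mat_extract (a b : ℝ) (hab : a < b) (V : Submodule ℝ (Fin 4 → ℝ))
    (P Q S : Matrix (Fin 2) (Fin 2) ℂ)
    (h : ∀ x ∈ Set.Ioo a b, ∀ v ∈ V, (tauM (P + Real.cos x • Q + Real.sin x • S)).mulVec v ∈ V) :
    (∀ v ∈ V, (tauM P).mulVec v ∈ V) ∧ (∀ v ∈ V, (tauM Q).mulVec v ∈ V) ∧
      (∀ v ∈ V, (tauM S).mulVec v ∈ V) := by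
  have key := fun v (hv : v ∈ V) => trig_extract a b hab V ((tauM P).mulVec v)
    ((tauM Q).mulVec v) ((tauM S).mulVec v) (fun x hx => by
      have := h x hx v hv
      simpa only [tauM_add, tauM_smul, Matrix.add_mulVec, Matrix.smul_mulVec] using this)
  exact ⟨fun v hv => (key v hv).1, fun v hv => (key v hv).2.1, fun v hv => (key v hv).2.2⟩

def mA (t r : ℝ) : Matrix (Fin 2) (Fin 2) ℂ := !![0, 0; ((r/t : ℝ) : ℂ), ((r^2/t^2 : ℝ) : ℂ)]
def mB (t : ℝ) : Matrix (Fin 2) (Fin 2) ℂ := !![0, 0; 0, -((1/t^2 : ℝ) : ℂ)]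
def mC (t r : ℝ) : Matrix (Fin 2) (Fin 2) ℂ :=
  !![-1, -((r/t : ℝ) : ℂ); -((r/t : ℝ) : ℂ), -((r^2/t^2 : ℝ) : ℂ)]
def mD (t r : ℝ) : Matrix (Fin 2) (Fin 2) ℂ := !![0, ((r/t : ℝ) : ℂ); 0, ((r^2/t^2 : ℝ) : ℂ)]

theorem Tmat_eq (t r θ η : ℝ) : Tmat t r θ η =
    (mA t r + Real.cos η • mC t r + Real.sin η • ((-I) • mC t r))
    + Real.cos θ • (mB t + Real.cos η • mD t r + Real.sin η • ((-I) • mD t r))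
    + Real.sin θ • (I • mB t + Real.cos η • (I • mD t r) + Real.sin η • mD t r) := by
  have e1 : Complex.exp ((θ:ℂ) * I) = Real.cos θ + Real.sin θ * I := by
    rw [Complex.exp_mul_I]; simp
  have e2 : Complex.exp (-(η:ℂ) * I) = Real.cos η - Real.sin η * I := by
    rw [Complex.exp_mul_I]; simp [sub_eq_add_neg]
  have e3 : Complex.exp (((θ - η : ℝ) : ℂ) * I) =
      (Real.cos θ + Real.sin θ * I) * (Real.cos η - Real.sin η * I) := by
    rw [← e1, ← e2, ← Complex.exp_add]; congr 1; push_cast; ring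
  have hI : I * I = -1 := Complex.I_mul_I
  unfold Tmat
  rw [e1, e2, e3]
  generalize Real.cos θ = c
  generalize Real.sin θ = s
  generalize Real.cos η = c'
  generalize Real.sin η = s'
  ext i j
  fin_cases i <;> fin_cases j <;>
    simp only [mA, mB, mC, mD, Matrix.add_apply, Matrix.smul_apply, Matrix.of_apply,
      Matrix.cons_val, Complex.real_smul, smul_eq_mul, Fin.zero_eta, Fin.mk_one, Fin.isValue,
      Matrix.cons_val', Matrix.cons_val_zero, Matrix.cons_val_one, Matrix.cons_val_fin_one]
  · ring
  · linear_combination (-(s : ℂ) * s' * ((r/t : ℝ) : ℂ)) * hI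
  · ring
  · linear_combination (-(s : ℂ) * s' * ((r^2/t^2 : ℝ) : ℂ)) * hI

/-- Irreducibility: if a subspace `V ⊆ ℝ⁴` is invariant under
`τ(T(θ,η))` for all `θ, η` in a nonempty open interval `I = (a,b)`, then `V` is trivial. -/
theorem tau_irreducible
    (t r : ℝ) (ht0 : 0 < t) (ht1 : t < 1) (hr0 : 0 < r) (hr1 : r < 1)
    (hrt : r^2 + t^2 = 1)
    (a b : ℝ) (hab : a < b)
    (V : Submodule ℝ (Fin 4 → ℝ))
    (hV : ∀ θ ∈ Set.Ioo a b, ∀ η ∈ Set.Ioo a b, ∀ v ∈ V,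
      (tauM (Tmat t r θ η)).mulVec v ∈ V) :
    V = ⊥ ∨ V = ⊤ := by
  have hη : ∀ η ∈ Set.Ioo a b, _ := fun η hη => mat_extract a b hab V _ _ _
    (fun θ hθ v hv => by
      have := hV θ hθ η hη v hv
      rw [Tmat_eq] at this
      exact this)
  obtain ⟨hA, -, -⟩ := mat_extract a b hab V _ _ _ (fun η h => (hη η h).1)
  obtain ⟨hB, hD, -⟩ := mat_extract a b hab V _ _ _ (fun η h => (hη η h).2.1)
  obtain ⟨hB', hD', -⟩ := mat_extract a b hab V _ _ _ (fun η h => (hη η h).2.2)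
  have hρ : 0 < r / t := div_pos hr0 ht0
  have fA : ∀ v, (tauM (mA t r)).mulVec v =
      ![0, 0, r/t * v 0 + r^2/t^2 * v 2, r/t * v 1 + r^2/t^2 * v 3] := by
    intro v; ext i
    fin_cases i <;> simp [tauM, mA, Matrix.mulVec, dotProduct, Fin.sum_univ_four, ← Complex.ofReal_pow, ← Complex.ofReal_div]
  have fB : ∀ v, (tauM (mB t)).mulVec v = ![0, 0, -(1/t^2) * v 2, -(1/t^2) * v 3] := by
    intro v; ext i
    fin_cases i <;> simp [tauM, mB, Matrix.mulVec, dotProduct, Fin.sum_univ_four, ← Complex.ofReal_pow, ← Complex.ofReal_inv]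
  have fB' : ∀ v, (tauM (I • mB t)).mulVec v = ![0, 0, -(1/t^2) * v 3, (1/t^2) * v 2] := by
    intro v; ext i
    fin_cases i <;> simp [tauM, mB, Matrix.mulVec, dotProduct, Fin.sum_univ_four, ← Complex.ofReal_pow, ← Complex.ofReal_inv]
  have fD : ∀ v, (tauM (mD t r)).mulVec v =
      ![r/t * v 2, r/t * v 3, r^2/t^2 * v 2, r^2/t^2 * v 3] := by
    intro v; ext i
    fin_cases i <;> simp [tauM, mD, Matrix.mulVec, dotProduct, Fin.sum_univ_four, ← Complex.ofReal_pow, ← Complex.ofReal_div]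
  by_cases hz : ∀ v ∈ V, v 2 = 0 ∧ v 3 = 0
  · left
    rw [Submodule.eq_bot_iff]
    intro v hv
    have h1 := hz _ (hA v hv)
    have h2 := hz v hv
    rw [fA] at h1
    simp [h2.1, h2.2, hr0.ne', ht0.ne'] at h1
    ext i
    fin_cases i <;> simp [h1, h2]
  · right
    push Not at hz
    obtain ⟨v, hv, hne⟩ := hz
    have hn : v 2 ^ 2 + v 3 ^ 2 ≠ 0 := by
      intro h0
      have h2 : v 2 = 0 := by nlinarith [sq_nonneg (v 2), sq_nonneg (v 3)]
      have h3 : v 3 = 0 := by nlinarith [sq_nonneg (v 2), sq_nonneg (v 3)]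
      exact hne h2 h3
    have hb := hB v hv
    have hb' := hB' v hv
    rw [fB] at hb
    rw [fB'] at hb'
    have e2 : ∀ x y : ℝ, ![0, 0, x, y] ∈ V := by
      intro x y
      have e := V.add_mem
        (V.smul_mem (-(t^2) * (x * v 2 + y * v 3) / (v 2 ^ 2 + v 3 ^ 2)) hb)
        (V.smul_mem (-(t^2) * (x * v 3 - y * v 2) / (v 2 ^ 2 + v 3 ^ 2)) hb')
      convert e using 1
      have := ht0.ne'
      ext i
      fin_cases i <;> simp <;> field_simp <;> ring
    rw [Submodule.eq_top_iff']
    intro w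
    have e := V.add_mem (hD _ (e2 (w 0 / (r/t)) (w 1 / (r/t))))
      (e2 (w 2 - r^2/t^2 * (w 0 / (r/t))) (w 3 - r^2/t^2 * (w 1 / (r/t))))
    rw [fD] at e
    convert e using 1
    have := ht0.ne'
    ext i
    fin_cases i <;> simp <;> field_simp

end
end

section
/- Fix real numbers t, r with 0 < t < 1, 0 < r < 1 and r² + t² = 1, and let θ, η ∈ ℝ satisfy e^{iθ} ≠ e^{iη}. Then the subgroup G(θ,η) of GL(2,ℂ) generated by the four matrices T(θ,θ), T(η,η), T(θ,η), T(η,θ) is unbounded: sup { ‖g‖ : g ∈ G(θ,η) } = ∞; in particular the closure of G(θ,η) in M₂(ℂ) is not compact. -/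
open Complex Matrix

noncomputable section
attribute [local instance] Matrix.normedAddCommGroup

theorem Tmat_aux (t r θ η : ℝ) (ht0 : 0 < t) (hrt : r^2 + t^2 = 1) :
    Tmat t r θ η = 
    !![-(Complex.exp (η * I))⁻¹, ((r/t : ℝ) : ℂ) * (Complex.exp (θ * I) - 1) * (Complex.exp (η * I))⁻¹;
      ((r/t : ℝ) : ℂ) * (1 - (Complex.exp (η * I))⁻¹),
      -Complex.exp (θ * I) - ((r/t : ℝ) : ℂ)^2 * (Complex.exp (θ * I) - 1) * (1 - (Complex.exp (η * I))⁻¹)] := by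
  have h1 : Complex.exp (-(η:ℂ) * I) = (Complex.exp (η * I))⁻¹ := by
    rw [← Complex.exp_neg]; congr 1; ring
  have h2 : Complex.exp (((θ - η : ℝ) : ℂ) * I) = Complex.exp (θ * I) * (Complex.exp (η * I))⁻¹ := by
    rw [← Complex.exp_neg, ← Complex.exp_add]; congr 1; push_cast; ring
  have h3 : (1/t^2 : ℝ) = 1 + (r/t)^2 := by
    field_simp; linarith
  have h4 : (r^2/t^2 : ℝ) = (r/t)^2 := by ring
  unfold Tmat
  rw [h1, h2, h3, h4]
  push_cast
  congr 1
  ext i j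
  fin_cases i <;> fin_cases j <;> simp <;> ring

theorem key_growth (G : Matrix (Fin 2) (Fin 2) ℂ) (c : ℂ) (hc : ‖c‖ = 1) (ε : ℝ) (hε : 0 < ε)
    (htr : G.trace = c * (2 + ε)) (hdet : G.det = c^2) (n : ℕ) :
    2 + n * ε ≤ ‖(G^n).trace‖ := by
  have hsq : G^2 = (c * (2 + ε)) • G - (c^2) • (1 : Matrix (Fin 2) (Fin 2) ℂ) := by
    rw [← htr, ← hdet]
    ext i j
    fin_cases i <;> fin_cases j <;>
      simp [pow_two, Matrix.mul_apply, Fin.sum_univ_two, Matrix.trace_fin_two, Matrix.det_fin_two] <;> ring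
  have hrec : ∀ n, (G^(n+2)).trace = c * (2 + ε) * (G^(n+1)).trace - c^2 * (G^n).trace := by
    intro n
    rw [pow_add, hsq, Matrix.mul_sub, Matrix.trace_sub, Matrix.mul_smul, Matrix.mul_smul,
      Matrix.trace_smul, Matrix.trace_smul, mul_one, smul_eq_mul, smul_eq_mul, ← pow_succ]
  have main : ∀ n : ℕ, ∃ u v : ℝ, (G^n).trace = c^n * u ∧ (G^(n+1)).trace = c^(n+1) * v ∧
      2 + n * ε ≤ u ∧ u + ε ≤ v := by
    intro n
    induction n with
    | zero => exact ⟨2, 2 + ε, by simp, by simp [htr], by simp, le_refl _⟩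
    | succ n ih =>
      obtain ⟨u, v, h1, h2, h3, h4⟩ := ih
      refine ⟨v, (2 + ε) * v - u, h2, ?_, ?_, ?_⟩
      · rw [hrec, h1, h2]; push_cast; ring
      · push_cast; linarith
      · have : (0:ℝ) ≤ n * ε := by positivity
        nlinarith
  obtain ⟨u, v, h1, -, h3, -⟩ := main n
  rw [h1, norm_mul, norm_pow, hc, one_pow, one_mul, Complex.norm_real]
  exact h3.trans (le_abs_self _)

/-- If `e^{iθ} ≠ e^{iη}`, the subgroup of `GL(2,ℂ)` generated by
`T(θ,θ), T(η,η), T(θ,η), T(η,θ)` is unbounded in norm; in particular its closure in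
`M₂(ℂ)` is not compact. -/
theorem generated_group_noncompact
    (t r : ℝ) (ht0 : 0 < t) (ht1 : t < 1) (hr0 : 0 < r) (hr1 : r < 1)
    (hrt : r^2 + t^2 = 1)
    (θ η : ℝ) (hne : Complex.exp ((θ:ℂ) * I) ≠ Complex.exp ((η:ℂ) * I))
    (A B C D : GL (Fin 2) ℂ)
    (hA : (A : Matrix (Fin 2) (Fin 2) ℂ) = Tmat t r θ θ)
    (hB : (B : Matrix (Fin 2) (Fin 2) ℂ) = Tmat t r η η)
    (hC : (C : Matrix (Fin 2) (Fin 2) ℂ) = Tmat t r θ η)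
    (hD : (D : Matrix (Fin 2) (Fin 2) ℂ) = Tmat t r η θ) :
    (¬ ∃ R : ℝ, ∀ g ∈ Subgroup.closure {A, B, C, D},
        ‖(g : Matrix (Fin 2) (Fin 2) ℂ)‖ ≤ R) ∧
    ¬ IsCompact (closure
      ((fun g : GL (Fin 2) ℂ => (g : Matrix (Fin 2) (Fin 2) ℂ)) ''
        (Subgroup.closure {A, B, C, D} : Set (GL (Fin 2) ℂ)))) := by
  have hbdd : ¬ ∃ R : ℝ, ∀ g ∈ Subgroup.closure {A, B, C, D},
        ‖(g : Matrix (Fin 2) (Fin 2) ℂ)‖ ≤ R := by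
    rintro ⟨R, hR⟩
    have hg : D⁻¹ * C ∈ Subgroup.closure {A, B, C, D} :=
      mul_mem (inv_mem (Subgroup.subset_closure (by simp))) (Subgroup.subset_closure (by simp))
    rw [Tmat_aux t r _ _ ht0 hrt] at hC hD
    have hk : 0 < r / t := div_pos hr0 ht0
    have na : ‖Complex.exp (θ * I)‖ = 1 := Complex.norm_exp_ofReal_mul_I θ
    have nb : ‖Complex.exp (η * I)‖ = 1 := Complex.norm_exp_ofReal_mul_I η
    generalize Complex.exp (θ * I) = a at *
    generalize Complex.exp (η * I) = b at *
    generalize r / t = k at *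
    have ha : a ≠ 0 := by intro h; simp [h] at na
    have hb : b ≠ 0 := by intro h; simp [h] at nb
    have nc : ‖a / b‖ = 1 := by rw [norm_div, na, nb, div_one]
    have hc1 : a / b - 1 ≠ 0 := by
      intro h; apply hne; rw [sub_eq_zero, div_eq_one_iff_eq hb] at h; exact h
    have hε : 0 < k^2 * Complex.normSq (a / b - 1) :=
      mul_pos (by positivity) (Complex.normSq_pos.2 hc1)
    have hεc : ((k^2 * Complex.normSq (a / b - 1) : ℝ) : ℂ) = k^2 * ((a / b - 1) * (b / a - 1)) := by
      have : (starRingEnd ℂ) (a / b) = b / a := by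
        rw [← Complex.inv_eq_conj nc, inv_div]
      rw [Complex.ofReal_mul, Complex.normSq_eq_conj_mul_self, map_sub, this]
      push_cast; rw [map_one]; ring
    have hdD : (D : Matrix (Fin 2) (Fin 2) ℂ).det = b / a := by
      rw [hD, Matrix.det_fin_two_of]; field_simp; ring
    have hdC : (C : Matrix (Fin 2) (Fin 2) ℂ).det = a / b := by
      rw [hC, Matrix.det_fin_two_of]; field_simp; ring
    have hG : ((D⁻¹ * C : GL (Fin 2) ℂ) : Matrix (Fin 2) (Fin 2) ℂ)
        = (a / b) • ((D : Matrix (Fin 2) (Fin 2) ℂ).adjugate * C) := by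
      rw [Units.val_mul, Matrix.coe_units_inv, Matrix.inv_def, hdD, Ring.inverse_eq_inv', inv_div,
        Matrix.smul_mul]
    have htr : ((D⁻¹ * C : GL (Fin 2) ℂ) : Matrix (Fin 2) (Fin 2) ℂ).trace
        = (a / b) * (2 + (k^2 * Complex.normSq (a / b - 1) : ℝ)) := by
      rw [hεc, hG, Matrix.trace_smul, hD, hC, Matrix.adjugate_fin_two_of, Matrix.trace_fin_two]
      simp only [smul_eq_mul, Matrix.mul_apply, Fin.sum_univ_two, Matrix.of_apply, Matrix.cons_val', Matrix.cons_val_zero, Matrix.cons_val_one, Matrix.cons_val_fin_one]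
      field_simp
      ring
    have hdet : ((D⁻¹ * C : GL (Fin 2) ℂ) : Matrix (Fin 2) (Fin 2) ℂ).det = (a / b)^2 := by
      rw [hG, Matrix.det_smul, Matrix.det_mul, Matrix.det_adjugate, hdD, hdC]
      simp
      field_simp
    have hgrow := key_growth _ _ nc _ hε htr hdet
    obtain ⟨n, hn⟩ := exists_nat_gt (2 * R / (k^2 * Complex.normSq (a / b - 1)))
    rw [div_lt_iff₀ hε] at hn
    have h1 := hgrow n
    have h2 := hR _ (pow_mem hg n)
    rw [Units.val_pow_eq_pow_val] at h2
    rw [Matrix.trace_fin_two] at h1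
    have h3 := norm_add_le ((((D⁻¹ * C : GL (Fin 2) ℂ) : Matrix (Fin 2) (Fin 2) ℂ)^n) 0 0)
      ((((D⁻¹ * C : GL (Fin 2) ℂ) : Matrix (Fin 2) (Fin 2) ℂ)^n) 1 1)
    have h4 := Matrix.norm_entry_le_entrywise_sup_norm
      (((D⁻¹ * C : GL (Fin 2) ℂ) : Matrix (Fin 2) (Fin 2) ℂ)^n) (i := 0) (j := 0)
    have h5 := Matrix.norm_entry_le_entrywise_sup_norm
      (((D⁻¹ * C : GL (Fin 2) ℂ) : Matrix (Fin 2) (Fin 2) ℂ)^n) (i := 1) (j := 1)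
    linarith
  refine ⟨hbdd, fun hcomp => hbdd ?_⟩
  obtain ⟨R, hR⟩ := hcomp.isBounded.exists_norm_le
  exact ⟨R, fun g hg => hR _ (subset_closure ⟨g, hg, rfl⟩)⟩

end
end

section
/- Fix real numbers t, r with 0 < t < 1, 0 < r < 1 and r² + t² = 1, let θ, η ∈ ℝ, and write x = e^{−iθ}, z = e^{−iη}. Then C := T(θ,θ) T(θ,η)^{−1} = [[x·conj(z), 0], [(r/t)(x·conj(z) − 1), 1]] and E := T(η,θ)^{−1} T(θ,θ) = [[1, (r/t)(1 − conj(x)·z)], [0, conj(x)·z]]. Moreover, det(CE) = det(EC) = 1 and (EC)^{−1} = (CE)^*. -/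
open Complex Matrix

noncomputable section

lemma Tmat_eq_s9 (t r : ℝ) (ht0 : 0 < t) (hrt : r^2 + t^2 = 1) (θ η : ℝ) :
    Tmat t r θ η =
      !![-Complex.exp (-(η:ℂ) * I),
        ((r/t : ℝ) : ℂ) * (Complex.exp ((θ:ℂ) * I) - 1) * Complex.exp (-(η:ℂ) * I);
        ((r/t : ℝ) : ℂ) * (1 - Complex.exp (-(η:ℂ) * I)),
        -(1 + ((r/t : ℝ) : ℂ)^2) * Complex.exp ((θ:ℂ) * I) + ((r/t : ℝ) : ℂ)^2 *
          (Complex.exp ((θ:ℂ) * I) * Complex.exp (-(η:ℂ) * I) + 1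
            - Complex.exp (-(η:ℂ) * I))] := by
  have h1 : Complex.exp (((θ - η : ℝ) : ℂ) * I)
      = Complex.exp ((θ:ℂ) * I) * Complex.exp (-(η:ℂ) * I) := by
    rw [← Complex.exp_add]; congr 1; push_cast; ring
  have h2 : ((1/t^2 : ℝ) : ℂ) = 1 + ((r/t : ℝ) : ℂ)^2 := by
    have : (1/t^2 : ℝ) = 1 + (r/t)^2 := by
      field_simp; linarith
    rw [this]; push_cast; ring
  have h3 : ((r^2/t^2 : ℝ) : ℂ) = ((r/t : ℝ) : ℂ)^2 := by
    push_cast; ring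
  unfold Tmat
  rw [h1, h2, h3]
  ext i j
  fin_cases i <;> fin_cases j <;> simp <;> ring

lemma Tmat_det (t r : ℝ) (ht0 : 0 < t) (hrt : r^2 + t^2 = 1) (θ η : ℝ) :
    IsUnit (Tmat t r θ η).det := by
  have : (Tmat t r θ η).det = Complex.exp ((θ:ℂ) * I) * Complex.exp (-(η:ℂ) * I) := by
    rw [Tmat_eq_s9 t r ht0 hrt, Matrix.det_fin_two_of]; ring
  rw [this]
  exact isUnit_iff_ne_zero.2 (mul_ne_zero (Complex.exp_ne_zero _) (Complex.exp_ne_zero _))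

/-- Explicit formulas for `C = T(θ,θ)T(θ,η)⁻¹` and `E = T(η,θ)⁻¹T(θ,θ)`
(with `x = e^{-iθ}`, `z = e^{-iη}`); moreover `det(CE) = det(EC) = 1` and `(EC)⁻¹ = (CE)*`. -/
theorem C_E_formulas
    (t r : ℝ) (ht0 : 0 < t) (ht1 : t < 1) (hr0 : 0 < r) (hr1 : r < 1)
    (hrt : r^2 + t^2 = 1) (θ η : ℝ)
    (x z : ℂ) (hx : x = Complex.exp (-(θ:ℂ) * I)) (hz : z = Complex.exp (-(η:ℂ) * I))
    (C E : Matrix (Fin 2) (Fin 2) ℂ)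
    (hC : C = Tmat t r θ θ * (Tmat t r θ η)⁻¹)
    (hE : E = (Tmat t r η θ)⁻¹ * Tmat t r θ θ) :
    C = !![x * (starRingEnd ℂ) z, 0;
           ((r/t : ℝ) : ℂ) * (x * (starRingEnd ℂ) z - 1), 1] ∧
    E = !![1, ((r/t : ℝ) : ℂ) * (1 - (starRingEnd ℂ) x * z);
           0, (starRingEnd ℂ) x * z] ∧
    (C * E).det = 1 ∧ (E * C).det = 1 ∧
    (E * C)⁻¹ = (C * E).conjTranspose := by
  have conj_e : ∀ a : ℝ, (starRingEnd ℂ) (Complex.exp (-(a:ℂ) * I)) = Complex.exp ((a:ℂ) * I) := by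
    intro a
    rw [← Complex.exp_conj]; simp
  have mul_e : ∀ a : ℝ, Complex.exp (-(a:ℂ) * I) * Complex.exp ((a:ℂ) * I) = 1 := by
    intro a
    rw [← Complex.exp_add]; simp
  have hX : x * (starRingEnd ℂ) x = 1 := by rw [hx, conj_e, mul_e]
  have hZ : z * (starRingEnd ℂ) z = 1 := by rw [hz, conj_e, mul_e]
  have eX : Complex.exp ((θ:ℂ) * I) = (starRingEnd ℂ) x := by rw [hx, conj_e]
  have eZ : Complex.exp ((η:ℂ) * I) = (starRingEnd ℂ) z := by rw [hz, conj_e]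
  have C1 : C = !![x * (starRingEnd ℂ) z, 0;
           ((r/t : ℝ) : ℂ) * (x * (starRingEnd ℂ) z - 1), 1] := by
    have key : !![x * (starRingEnd ℂ) z, 0;
           ((r/t : ℝ) : ℂ) * (x * (starRingEnd ℂ) z - 1), 1] * Tmat t r θ η = Tmat t r θ θ := by
      rw [Tmat_eq_s9 t r ht0 hrt, Tmat_eq_s9 t r ht0 hrt, eX, ← hx, ← hz]
      generalize ((r/t : ℝ) : ℂ) = k
      generalize (starRingEnd ℂ) x = X at *
      generalize (starRingEnd ℂ) z = Z at *
      clear * - hX hZ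
      ext i j
      fin_cases i <;> fin_cases j <;> simp [Matrix.mul_apply, Fin.sum_univ_two] <;> grind
    rw [hC, ← key, Matrix.mul_nonsing_inv_cancel_right _ _ (Tmat_det t r ht0 hrt θ η)]
  have E1 : E = !![1, ((r/t : ℝ) : ℂ) * (1 - (starRingEnd ℂ) x * z);
           0, (starRingEnd ℂ) x * z] := by
    have key : Tmat t r η θ * !![1, ((r/t : ℝ) : ℂ) * (1 - (starRingEnd ℂ) x * z);
           0, (starRingEnd ℂ) x * z] = Tmat t r θ θ := by
      rw [Tmat_eq_s9 t r ht0 hrt, Tmat_eq_s9 t r ht0 hrt, eX, eZ, ← hx]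
      generalize ((r/t : ℝ) : ℂ) = k
      generalize (starRingEnd ℂ) x = X at *
      generalize (starRingEnd ℂ) z = Z at *
      clear * - hX hZ
      ext i j
      fin_cases i <;> fin_cases j <;> simp [Matrix.mul_apply, Fin.sum_univ_two] <;> grind
    rw [hE, ← key, Matrix.nonsing_inv_mul_cancel_left _ _ (Tmat_det t r ht0 hrt η θ)]
  have dC : C.det = x * (starRingEnd ℂ) z := by rw [C1, Matrix.det_fin_two_of]; ring
  have dE : E.det = (starRingEnd ℂ) x * z := by rw [E1, Matrix.det_fin_two_of]; ring
  refine ⟨C1, E1, ?_, ?_, ?_⟩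
  · rw [Matrix.det_mul, dC, dE]; linear_combination hX * (z * (starRingEnd ℂ) z) + hZ
  · rw [Matrix.det_mul, dC, dE]; linear_combination hX * (z * (starRingEnd ℂ) z) + hZ
  · apply Matrix.inv_eq_right_inv
    rw [C1, E1]
    have hk : (starRingEnd ℂ) ((r/t : ℝ) : ℂ) = ((r/t : ℝ) : ℂ) := Complex.conj_ofReal _
    clear C1 E1 dC dE
    generalize ((r/t : ℝ) : ℂ) = k at *
    ext i j
    fin_cases i <;> fin_cases j <;>
      simp [Matrix.mul_apply, Fin.sum_univ_two, Matrix.conjTranspose_apply, hk] <;>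
      (generalize (starRingEnd ℂ) x = X at *
       generalize (starRingEnd ℂ) z = Z at *
       clear * - hX hZ
       grind)

end
end

section
/- Fix real numbers t, r with 0 < t < 1, 0 < r < 1 and r² + t² = 1, a sequence of phases θ = (θ_k)_{k∈ℤ}, and α ∈ ℝ. A sequence c : ℤ → ℂ satisfies the formal eigenvalue equations e^{−iθ_k} (S c)_k = e^{iα} c_k for all k ∈ ℤ (where (S c)_k denotes the finite sum Σ_j ⟨e_k, S e_j⟩ c_j given by the band matrix S) if and only if for every k ∈ ℤ the vector (c_{2k+1}, c_{2k+2})ᵀ equals T(θ_{2k} + α, θ_{2k+1} + α) applied to (c_{2k−1}, c_{2k})ᵀ. -/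
open Complex Matrix

noncomputable section

/-- The formal action of the band matrix `S` on an arbitrary sequence `c : ℤ → ℂ`:
`(S c)_k = Σ_j ⟨e_k, S e_j⟩ c_j`, a finite sum since `⟨e_k, S e_j⟩ = 0` for `|j - k| > 2`. -/
def Sact (t r : ℝ) (c : ℤ → ℂ) (k : ℤ) : ℂ :=
  ∑ j ∈ Finset.Icc (k - 2) (k + 2), Sent t r k j * c j

theorem Sact_even (t r : ℝ) (c : ℤ → ℂ) (k : ℤ) : Sact t r c (2*k) =
    r*t*c (2*k-1) + r^2*c (2*k) + r*t*c (2*k+1) - t^2*c (2*k+2) := by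
  have h : Finset.Icc (2*k - 2) (2*k + 2) = {2*k-2, 2*k-1, 2*k, 2*k+1, 2*k+2} := by
    ext x; simp only [Finset.mem_Icc, Finset.mem_insert, Finset.mem_singleton]; omega
  have hp : (2*k) % 2 = 0 := by omega
  unfold Sact
  rw [h, Finset.sum_insert, Finset.sum_insert, Finset.sum_insert, Finset.sum_insert,
    Finset.sum_singleton]
  · have e1 : Sent t r (2*k) (2*k-2) = 0 := by
      unfold Sent; rw [if_pos hp, if_neg, if_neg, if_neg, if_neg] <;> omega
    have e2 : Sent t r (2*k) (2*k-1) = (r*t : ℝ) := by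
      unfold Sent; rw [if_pos hp, if_pos]; omega
    have e3 : Sent t r (2*k) (2*k) = (r^2 : ℝ) := by
      unfold Sent; rw [if_pos hp, if_neg, if_pos] <;> omega
    have e4 : Sent t r (2*k) (2*k+1) = (r*t : ℝ) := by
      unfold Sent; rw [if_pos hp, if_neg, if_neg, if_pos] <;> omega
    have e5 : Sent t r (2*k) (2*k+2) = (-t^2 : ℝ) := by
      unfold Sent; rw [if_pos hp, if_neg, if_neg, if_neg, if_pos] <;> omega
    rw [e1, e2, e3, e4, e5]; push_cast; ring
  all_goals simp only [Finset.mem_insert, Finset.mem_singleton]; omega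

theorem Sact_odd (t r : ℝ) (c : ℤ → ℂ) (k : ℤ) : Sact t r c (2*k+1) =
    -t^2*c (2*k-1) - r*t*c (2*k) + r^2*c (2*k+1) - r*t*c (2*k+2) := by
  have h : Finset.Icc (2*k + 1 - 2) (2*k + 1 + 2) = {2*k-1, 2*k, 2*k+1, 2*k+2, 2*k+3} := by
    ext x; simp only [Finset.mem_Icc, Finset.mem_insert, Finset.mem_singleton]; omega
  have hp : ¬ (2*k+1) % 2 = 0 := by omega
  unfold Sact
  rw [h, Finset.sum_insert, Finset.sum_insert, Finset.sum_insert, Finset.sum_insert,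
    Finset.sum_singleton]
  · have e1 : Sent t r (2*k+1) (2*k-1) = (-t^2 : ℝ) := by
      unfold Sent; rw [if_neg hp, if_pos]; omega
    have e2 : Sent t r (2*k+1) (2*k) = (-(r*t) : ℝ) := by
      unfold Sent; rw [if_neg hp, if_neg, if_pos] <;> omega
    have e3 : Sent t r (2*k+1) (2*k+1) = (r^2 : ℝ) := by
      unfold Sent; rw [if_neg hp, if_neg, if_neg, if_pos] <;> omega
    have e4 : Sent t r (2*k+1) (2*k+2) = (-(r*t) : ℝ) := by
      unfold Sent; rw [if_neg hp, if_neg, if_neg, if_neg, if_pos] <;> omega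
    have e5 : Sent t r (2*k+1) (2*k+3) = 0 := by
      unfold Sent; rw [if_neg hp, if_neg, if_neg, if_neg, if_neg] <;> omega
    rw [e1, e2, e3, e4, e5]; push_cast; ring
  all_goals simp only [Finset.mem_insert, Finset.mem_singleton]; omega

theorem alg_equiv (t r u v w a b x y : ℂ) (ht : t ≠ 0) (h : r^2 + t^2 = 1) (hv : v * w = 1) :
    (r*t*a + r^2*b + r*t*x - t^2*y = u*b ∧ -t^2*a - r*t*b + r^2*x - r*t*y = v*x) ↔
    (x = -w*a + r/t*(u*w - w)*b ∧
     y = r/t*(1-w)*a + (-(1/t^2)*u + r^2/t^2*(u*w + 1 - w))*b) := by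
  constructor
  · rintro ⟨h1, h2⟩
    have hx : x = -w*a + r/t*(u*w - w)*b := by
      field_simp
      linear_combination (-w*t)*h2 + (w*r)*h1 - w*(t*a+r*b)*h - t*x*hv
    refine ⟨hx, ?_⟩
    have hy : y = r/t*a + r^2/t^2*b + r/t*x - u*b/t^2 := by
      field_simp
      linear_combination -h1
    rw [hy, hx]; field_simp; ring
  · rintro ⟨h1, h2⟩
    have hy : y = r/t*a + r^2/t^2*b + r/t*x - u*b/t^2 := by
      rw [h2, h1]; field_simp; ring
    have hx : t*x = -w*t*a + r*(u*w - w)*b := by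
      rw [h1]; field_simp
    have E : r*t*a + r^2*b + r*t*x - t^2*y = u*b := by
      rw [hy]; field_simp; ring
    refine ⟨E, ?_⟩
    apply mul_left_cancel₀ ht
    linear_combination r*E - v*hx - (t*a+r*b)*h + (t*a + r*b - r*u*b)*hv

theorem eig_iff (θ α : ℝ) (s c : ℂ) : Complex.exp (-(θ : ℂ) * I) * s =
      Complex.exp ((α : ℂ) * I) * c ↔ s = Complex.exp (((θ + α : ℝ) : ℂ) * I) * c := by
  have h : Complex.exp (θ * I) * Complex.exp (-(θ : ℂ) * I) = 1 := by
    rw [← Complex.exp_add]; simp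
  have h2 : Complex.exp (((θ + α : ℝ) : ℂ) * I)
      = Complex.exp (θ * I) * Complex.exp (α * I) := by
    rw [← Complex.exp_add]; push_cast; ring_nf
  rw [h2]
  constructor
  · intro e
    linear_combination Complex.exp (θ * I) * e - s * h
  · intro e
    rw [e]
    linear_combination Complex.exp (α * I) * c * h

theorem forall_parity (P : ℤ → Prop) : (∀ k, P k) ↔ ∀ k, P (2*k) ∧ P (2*k+1) := by
  refine ⟨fun h k => ⟨h _, h _⟩, fun h k => ?_⟩
  rcases Int.even_or_odd' k with ⟨m, rfl | rfl⟩
  · exact (h m).1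
  · exact (h m).2

/-- A sequence `c` solves the formal eigenvalue equations
`e^{-iθ_k}(Sc)_k = e^{iα} c_k` for all `k ∈ ℤ` iff the transfer matrix relations
`(c_{2k+1}, c_{2k+2})ᵀ = T(θ_{2k}+α, θ_{2k+1}+α)(c_{2k-1}, c_{2k})ᵀ` hold for all `k ∈ ℤ`. -/
theorem transfer_matrix_equivalence
    (t r : ℝ) (ht0 : 0 < t) (ht1 : t < 1) (hr0 : 0 < r) (hr1 : r < 1)
    (hrt : r^2 + t^2 = 1)
    (θ : ℤ → ℝ) (α : ℝ) (c : ℤ → ℂ) :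
    (∀ k : ℤ, Complex.exp (-(θ k : ℂ) * I) * Sact t r c k =
      Complex.exp ((α : ℂ) * I) * c k) ↔
    (∀ k : ℤ, ![c (2*k+1), c (2*k+2)] =
      (Tmat t r (θ (2*k) + α) (θ (2*k+1) + α)).mulVec ![c (2*k-1), c (2*k)]) := by
  rw [forall_parity]
  refine forall_congr' fun k => ?_
  rw [eig_iff, eig_iff, Sact_even, Sact_odd]
  have hv : Complex.exp (((θ (2*k+1) + α : ℝ) : ℂ) * I) *
      Complex.exp (-((θ (2*k+1) + α : ℝ) : ℂ) * I) = 1 := by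
    rw [← Complex.exp_add, neg_mul, add_neg_cancel, Complex.exp_zero]
  have huw : Complex.exp (((θ (2*k) + α - (θ (2*k+1) + α) : ℝ) : ℂ) * I) =
      Complex.exp (((θ (2*k) + α : ℝ) : ℂ) * I) *
      Complex.exp (-((θ (2*k+1) + α : ℝ) : ℂ) * I) := by
    rw [← Complex.exp_add]; push_cast; ring_nf
  rw [alg_equiv (t : ℂ) r _ _ _ _ _ _ _ (by exact_mod_cast ht0.ne') (by exact_mod_cast hrt) hv]
  unfold Tmat
  rw [huw]
  generalize Complex.exp (((θ (2*k) + α : ℝ) : ℂ) * I) = u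
  generalize Complex.exp (-((θ (2*k+1) + α : ℝ) : ℂ) * I) = w
  rw [funext_iff, Fin.forall_fin_two]
  simp [Matrix.mulVec, dotProduct, Fin.sum_univ_two]

end
end
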